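/- arXiv:1708.05017 — 9 statements merged into one kernel-verified Lean document; each statement's English description precedes it below -/
import Mathlib

section
/- Define ω(x) = 0 if x ∈ A, ω(x) = 1 if x ∈ R \ A, and ω(x) = 2 if x ∉ A ∪ R. Then for every x ∈ ℝ², ω(x) = max{ s ∈ {0,1,2} : limsup_{r→0⁺} μ(closedBall(x,r))/r^s < ∞ }. In other words: for x ∈ A the ratio μ(closedBall(x,r))/r^s diverges as r→0⁺ for s = 1 and s = 2; for x ∈ R \ A the ratio stays bounded for s = 1 but diverges for s = 2; and for x ∉ A ∪ R the ratio stays bounded for s = 2 (the s = 0 ratio is always bounded by 1). -/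
open MeasureTheory Filter Metric Set Topology

/-!
Everything follows from comparing `μ (closedBall x r)` with powers of `r` as `r → 0⁺`.

* At `x ∈ A` the atom gives `μ (closedBall x r) ≥ π₀ a₀`.
* At `x = γ j t ∈ R`, the `L`-Lipschitz bound puts the image of a subinterval of `[0,1]` of length
  `r / L` with endpoint `t` inside the ball, so `μ (closedBall x r) ≥ π₁ a₀ r / L`
  (`le_map_curve_closedBall`).
* The lower bound `c |s - t| ≤ ‖γ j s - γ j t‖` confines the parameters landing in the ball to an
  interval of length `4 r / c`, so `μ₁ (closedBall x r)` is `O(r)`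
  (`map_curve_closedBall_le`), while `μ₂ (closedBall x r) = O(r²)` since `p₂` is bounded.
* Off the closed sets `A` and `R`, the measures `μ₀` and `μ₁` respectively vanish on all small balls.

`limsup_ratio_lt_top` and `tendsto_ratio_top` turn the upper bounds `O(r^s)` into finite limsups and
the lower bounds of order `r^s` into divergence for larger exponents.
-/

lemma limsup_ratio_lt_top {m : ℝ → ENNReal} {s : ℕ} {C : ENNReal} (hC : C ≠ ⊤)
    (h : ∀ᶠ r in 𝓝[>] (0:ℝ), m r ≤ C * ENNReal.ofReal (r ^ s)) :
    Filter.limsup (fun r : ℝ => m r / ENNReal.ofReal (r ^ s)) (𝓝[>] (0:ℝ)) < ⊤ := by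
  refine lt_of_le_of_lt (Filter.limsup_le_of_le (a := C) (by isBoundedDefault) ?_) hC.lt_top
  filter_upwards [h] with r hr
  exact ENNReal.div_le_of_le_mul hr

lemma tendsto_ratio_top {m : ℝ → ENNReal} {s t : ℕ} (hst : s < t) {C : ENNReal} (hC : C ≠ 0)
    (h : ∀ᶠ r in 𝓝[>] (0:ℝ), C * ENNReal.ofReal (r ^ s) ≤ m r) :
    Tendsto (fun r : ℝ => m r / ENNReal.ofReal (r ^ t)) (𝓝[>] (0:ℝ)) (𝓝 ⊤) := by
  have h1 : Tendsto (fun r : ℝ => C * ENNReal.ofReal r⁻¹) (𝓝[>] (0:ℝ)) (𝓝 ⊤) := by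
    have := ENNReal.Tendsto.const_mul (a := C)
      (ENNReal.tendsto_ofReal_atTop.comp tendsto_inv_nhdsGT_zero) (Or.inl ENNReal.top_ne_zero)
    rwa [ENNReal.mul_top hC] at this
  refine tendsto_nhds_top_mono h1 ?_
  filter_upwards [h, self_mem_nhdsWithin, Ioo_mem_nhdsGT (zero_lt_one' ℝ)] with r hr hr0 hr1
  have hr0 : 0 < r := hr0
  have hpos : 0 < r ^ t := by positivity
  rw [ENNReal.le_div_iff_mul_le (Or.inl (by simpa using hpos)) (Or.inl ENNReal.ofReal_ne_top)]
  refine le_trans ?_ hr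
  rw [mul_assoc, ← ENNReal.ofReal_mul (by positivity)]
  gcongr
  obtain ⟨d, rfl⟩ := Nat.exists_eq_add_of_lt hst
  rw [pow_succ, mul_comm, mul_assoc, mul_inv_cancel₀ hr0.ne', mul_one]
  exact pow_le_pow_of_le_one hr0.le hr1.2.le (by omega)

/-- A curve with `c |s - t| ≤ ‖g s - g t‖` and density at most `A₀` has mass at most `A₀ * (4 r / c)` in a ball of
radius `r`, whether or not its centre lies on the curve. -/
lemma map_curve_closedBall_le {E : Type*} [NormedAddCommGroup E] [MeasurableSpace E] [BorelSpace E]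
    {c A₀ : ℝ} (hc : 0 < c) {g : ℝ → E} (hg : Measurable g)
    (hlow : ∀ s ∈ Icc (0:ℝ) 1, ∀ t ∈ Icc (0:ℝ) 1, c * |s - t| ≤ ‖g s - g t‖)
    {f : ℝ → ℝ} (hf : ∀ t ∈ Icc (0:ℝ) 1, f t ≤ A₀) (x : E) (r : ℝ) :
    Measure.map g ((volume.restrict (Icc (0:ℝ) 1)).withDensity fun t => ENNReal.ofReal (f t))
      (closedBall x r) ≤ ENNReal.ofReal A₀ * ENNReal.ofReal (4 / c) * ENNReal.ofReal r := by
  have hm : MeasurableSet (g ⁻¹' closedBall x r) := hg measurableSet_closedBall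
  rw [Measure.map_apply hg measurableSet_closedBall, withDensity_apply _ hm,
    Measure.restrict_restrict hm]
  rcases (g ⁻¹' closedBall x r ∩ Icc 0 1).eq_empty_or_nonempty with he | ⟨s, hs, hs1⟩
  · simp [he]
  have hsub : g ⁻¹' closedBall x r ∩ Icc 0 1 ⊆ closedBall s (2 * r / c) := by
    rintro t ⟨ht, ht1⟩
    have h1 := hlow t ht1 s hs1
    have h2 : dist (g t) (g s) ≤ r + r :=
      (dist_triangle_right _ _ x).trans (add_le_add ht hs)
    rw [dist_eq_norm] at h2
    rw [mem_closedBall, Real.dist_eq, le_div_iff₀ hc]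
    linarith
  calc ∫⁻ t in g ⁻¹' closedBall x r ∩ Icc 0 1, ENNReal.ofReal (f t)
      ≤ ∫⁻ t in g ⁻¹' closedBall x r ∩ Icc 0 1, ENNReal.ofReal A₀ :=
        setLIntegral_mono' (hm.inter measurableSet_Icc)
          fun t ht => ENNReal.ofReal_le_ofReal (hf t ht.2)
    _ = ENNReal.ofReal A₀ * volume (g ⁻¹' closedBall x r ∩ Icc 0 1) := by
        rw [setLIntegral_const]
    _ ≤ ENNReal.ofReal A₀ * volume (closedBall s (2 * r / c)) := by gcongr
    _ = ENNReal.ofReal A₀ * ENNReal.ofReal (4 / c) * ENNReal.ofReal r := by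
        have h4 : 0 ≤ 4 / c := by positivity
        rw [Real.volume_closedBall, mul_assoc, ← ENNReal.ofReal_mul h4]
        congr 2
        ring

/-- Around one of its own points, a Lipschitz curve with density at least `a₀` carries mass at least
`a₀ * (r / L)` in a ball of radius `r ≤ L / 2`. -/
lemma le_map_curve_closedBall {E : Type*} [NormedAddCommGroup E] [MeasurableSpace E] [BorelSpace E]
    {L a₀ : ℝ} (hL : 0 < L) {g : ℝ → E} (hg : Measurable g)
    (hup : ∀ s ∈ Icc (0:ℝ) 1, ∀ t ∈ Icc (0:ℝ) 1, ‖g s - g t‖ ≤ L * |s - t|)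
    {f : ℝ → ℝ} (hf : ∀ t ∈ Icc (0:ℝ) 1, a₀ ≤ f t) {t : ℝ} (ht : t ∈ Icc (0:ℝ) 1)
    {r : ℝ} (hr : 0 < r) (hrL : r / L ≤ 1 / 2) :
    ENNReal.ofReal a₀ * ENNReal.ofReal (1 / L) * ENNReal.ofReal r ≤
    Measure.map g ((volume.restrict (Icc (0:ℝ) 1)).withDensity fun t => ENNReal.ofReal (f t))
      (closedBall (g t) r) := by
  have hm : MeasurableSet (g ⁻¹' closedBall (g t) r) := hg measurableSet_closedBall
  rw [Measure.map_apply hg measurableSet_closedBall, withDensity_apply _ hm,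
    Measure.restrict_restrict hm]
  have hrL0 : 0 < r / L := by positivity
  -- The interval extends from `t` towards the farther endpoint of `[0,1]`, so it stays inside.
  obtain ⟨a, ha0, ha1, hat, hta⟩ : ∃ a, 0 ≤ a ∧ a + r / L ≤ 1 ∧ a ≤ t ∧ t ≤ a + r / L := by
    rcases le_total t (1 / 2) with h | h
    · exact ⟨t, ht.1, by linarith, le_rfl, by linarith⟩
    · exact ⟨t - r / L, by linarith, by linarith [ht.2], by linarith, by linarith⟩
  have hsub : Icc a (a + r / L) ⊆ g ⁻¹' closedBall (g t) r ∩ Icc 0 1 := by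
    intro s hs
    have hs1 : s ∈ Icc (0:ℝ) 1 := ⟨ha0.trans hs.1, hs.2.trans ha1⟩
    refine ⟨?_, hs1⟩
    have h1 := hup s hs1 t ht
    have h2 : |s - t| ≤ r / L := abs_le.2 ⟨by linarith [hs.1], by linarith [hs.2]⟩
    rw [le_div_iff₀ hL] at h2
    rw [mem_preimage, mem_closedBall, dist_eq_norm]
    linarith
  calc ENNReal.ofReal a₀ * ENNReal.ofReal (1 / L) * ENNReal.ofReal r
      = ENNReal.ofReal a₀ * volume (Icc a (a + r / L)) := by
        rw [Real.volume_Icc, mul_assoc, ← ENNReal.ofReal_mul (by positivity)]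
        congr 2
        ring
    _ ≤ ENNReal.ofReal a₀ * volume (g ⁻¹' closedBall (g t) r ∩ Icc 0 1) := by gcongr
    _ = ∫⁻ s in g ⁻¹' closedBall (g t) r ∩ Icc 0 1, ENNReal.ofReal a₀ := by
        rw [setLIntegral_const]
    _ ≤ ∫⁻ s in g ⁻¹' closedBall (g t) r ∩ Icc 0 1, ENNReal.ofReal (f s) :=
        setLIntegral_mono' (hm.inter measurableSet_Icc)
          fun s hs => ENNReal.ofReal_le_ofReal (hf s hs.2)

lemma withDensity_closedBall_le {A₀ : ℝ} {p : EuclideanSpace ℝ (Fin 2) → ℝ}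
    (hp : ∀ x, p x ≤ A₀) (x : EuclideanSpace ℝ (Fin 2)) {r : ℝ} (hr : 0 ≤ r) :
    (volume.withDensity fun x => ENNReal.ofReal (p x)) (closedBall x r) ≤
      ENNReal.ofReal A₀ * volume (ball (0 : EuclideanSpace ℝ (Fin 2)) 1) *
        ENNReal.ofReal (r ^ 2) := by
  rw [withDensity_apply _ measurableSet_closedBall]
  calc ∫⁻ y in closedBall x r, ENNReal.ofReal (p y)
      ≤ ∫⁻ y in closedBall x r, ENNReal.ofReal A₀ :=
        lintegral_mono fun y => ENNReal.ofReal_le_ofReal (hp y)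
    _ = ENNReal.ofReal A₀ * volume (closedBall x r) := by rw [setLIntegral_const]
    _ = _ := by
        rw [Measure.addHaar_closedBall _ _ hr, finrank_euclideanSpace_fin, mul_assoc,
          mul_comm (ENNReal.ofReal (r ^ 2))]

lemma eventually_measure_closedBall_eq_zero {E : Type*} [PseudoMetricSpace E] [MeasurableSpace E]
    {ν : Measure E} {S : Set E} (hS : IsClosed S) (hν : ν Sᶜ = 0) {x : E} (hx : x ∉ S) :
    ∀ᶠ r in 𝓝[>] (0:ℝ), ν (closedBall x r) = 0 := by
  obtain ⟨ε, hε, h⟩ := Metric.isOpen_iff.1 hS.isOpen_compl x hx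
  filter_upwards [Ioo_mem_nhdsGT hε] with r hr
  exact measure_mono_null ((closedBall_subset_ball hr.2).trans h) hν

/-- with `ω(x) = 0` for `x ∈ A`, `ω(x) = 1` for `x ∈ R \ A` and
`ω(x) = 2` for `x ∉ A ∪ R`, one has
`ω(x) = max{s ∈ {0,1,2} : limsup_{r→0⁺} μ(B̄(x,r))/r^s < ∞}` for every `x`.
Equivalently: for `x ∈ A` the ratios with `s = 1, 2` diverge; for `x ∈ R \ A`
the ratio with `s = 1` stays bounded while the ratio with `s = 2` diverges; and
for `x ∉ A ∪ R` the ratio with `s = 2` stays bounded. -/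
theorem dimension_eq_max_bounded_hausdorff_ratio
    (a₀ A₀ c L π₀ π₁ π₂ : ℝ)
    (ha₀ : 0 < a₀) (ha₀A₀ : a₀ ≤ A₀) (hc : 0 < c) (hcL : c ≤ L)
    (hπ₀ : 0 < π₀) (hπ₁ : 0 < π₁) (hπ₂ : 0 < π₂) (hπsum : π₀ + π₁ + π₂ = 1)
    (A : Set (EuclideanSpace ℝ (Fin 2))) (hAfin : A.Finite) (hAne : A.Nonempty)
    (μ₀ : Measure (EuclideanSpace ℝ (Fin 2))) [IsProbabilityMeasure μ₀]
    (hμ₀supp : μ₀ Aᶜ = 0)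
    (hμ₀atom : ∀ a ∈ A, ENNReal.ofReal a₀ ≤ μ₀ {a})
    (k : ℕ) (γ : Fin k → ℝ → EuclideanSpace ℝ (Fin 2))
    (hγmeas : ∀ j, Measurable (γ j))
    (hγlow : ∀ j, ∀ s ∈ Icc (0:ℝ) 1, ∀ t ∈ Icc (0:ℝ) 1, c * |s - t| ≤ ‖γ j s - γ j t‖)
    (hγup : ∀ j, ∀ s ∈ Icc (0:ℝ) 1, ∀ t ∈ Icc (0:ℝ) 1, ‖γ j s - γ j t‖ ≤ L * |s - t|)
    (R : Set (EuclideanSpace ℝ (Fin 2))) (hR : R = ⋃ j, γ j '' Icc (0:ℝ) 1)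
    (hAR : A ⊆ R)
    (f : Fin k → ℝ → ℝ) (hfmeas : ∀ j, Measurable (f j))
    (hflow : ∀ j, ∀ t ∈ Icc (0:ℝ) 1, a₀ ≤ f j t)
    (hfup : ∀ j, ∀ t ∈ Icc (0:ℝ) 1, f j t ≤ A₀)
    (μ₁ : Measure (EuclideanSpace ℝ (Fin 2))) [IsProbabilityMeasure μ₁]
    (hμ₁ : μ₁ = ∑ j : Fin k, Measure.map (γ j)
      ((volume.restrict (Icc (0:ℝ) 1)).withDensity fun t => ENNReal.ofReal (f j t)))
    (p₂ : EuclideanSpace ℝ (Fin 2) → ℝ) (hp₂meas : Measurable p₂)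
    (hp₂low : ∀ x, 0 ≤ p₂ x) (hp₂up : ∀ x, p₂ x ≤ A₀)
    (μ₂ : Measure (EuclideanSpace ℝ (Fin 2))) [IsProbabilityMeasure μ₂]
    (hμ₂ : μ₂ = volume.withDensity fun x => ENNReal.ofReal (p₂ x))
    (μ : Measure (EuclideanSpace ℝ (Fin 2)))
    (hμ : μ = ENNReal.ofReal π₀ • μ₀ + ENNReal.ofReal π₁ • μ₁ + ENNReal.ofReal π₂ • μ₂)
    :
    (∀ x : EuclideanSpace ℝ (Fin 2),
      (x ∈ A → 0 = sSup {s : ℕ | s ≤ 2 ∧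
          Filter.limsup (fun r : ℝ => μ (closedBall x r) / ENNReal.ofReal (r ^ s))
            (𝓝[>] (0:ℝ)) < ⊤}) ∧
      (x ∈ R \ A → 1 = sSup {s : ℕ | s ≤ 2 ∧
          Filter.limsup (fun r : ℝ => μ (closedBall x r) / ENNReal.ofReal (r ^ s))
            (𝓝[>] (0:ℝ)) < ⊤}) ∧
      (x ∉ A ∪ R → 2 = sSup {s : ℕ | s ≤ 2 ∧
          Filter.limsup (fun r : ℝ => μ (closedBall x r) / ENNReal.ofReal (r ^ s))
            (𝓝[>] (0:ℝ)) < ⊤})) ∧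
    (∀ x ∈ A,
      Tendsto (fun r : ℝ => μ (closedBall x r) / ENNReal.ofReal (r ^ 1))
        (𝓝[>] (0:ℝ)) (𝓝 ⊤) ∧
      Tendsto (fun r : ℝ => μ (closedBall x r) / ENNReal.ofReal (r ^ 2))
        (𝓝[>] (0:ℝ)) (𝓝 ⊤)) ∧
    (∀ x ∈ R \ A,
      Filter.limsup (fun r : ℝ => μ (closedBall x r) / ENNReal.ofReal (r ^ 1))
        (𝓝[>] (0:ℝ)) < ⊤ ∧
      Tendsto (fun r : ℝ => μ (closedBall x r) / ENNReal.ofReal (r ^ 2))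
        (𝓝[>] (0:ℝ)) (𝓝 ⊤)) ∧
    (∀ x ∉ A ∪ R,
      Filter.limsup (fun r : ℝ => μ (closedBall x r) / ENNReal.ofReal (r ^ 2))
        (𝓝[>] (0:ℝ)) < ⊤) := by
  have hL : 0 < L := hc.trans_le hcL
  have hπ₀a : ENNReal.ofReal π₀ * ENNReal.ofReal a₀ ≠ 0 := by simp [hπ₀, ha₀]
  have hpos : ∀ᶠ r in 𝓝[>] (0:ℝ), 0 < r := self_mem_nhdsWithin
  have hsmall : ∀ᶠ r in 𝓝[>] (0:ℝ), r < 1 :=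
    (eventually_lt_nhds one_pos).filter_mono nhdsWithin_le_nhds
  have hμle : ∀ S, μ S = ENNReal.ofReal π₀ * μ₀ S + ENNReal.ofReal π₁ * μ₁ S
      + ENNReal.ofReal π₂ * μ₂ S := by
    intro S
    simp [hμ]
  have lowA : ∀ x ∈ A, ∀ᶠ r in 𝓝[>] (0:ℝ),
      ENNReal.ofReal π₀ * ENNReal.ofReal a₀ * ENNReal.ofReal (r ^ 0) ≤ μ (closedBall x r) := by
    intro x hx
    filter_upwards [hpos] with r hr
    rw [hμle, pow_zero, ENNReal.ofReal_one, mul_one, add_assoc]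
    refine le_add_right ?_
    gcongr
    exact (hμ₀atom x hx).trans
      (measure_mono (singleton_subset_iff.2 (mem_closedBall_self hr.le)))
  have lowR : ∀ x ∈ R, ∀ᶠ r in 𝓝[>] (0:ℝ),
      ENNReal.ofReal π₁ * (ENNReal.ofReal a₀ * ENNReal.ofReal (1 / L)) * ENNReal.ofReal (r ^ 1)
        ≤ μ (closedBall x r) := by
    intro x hx
    rw [hR] at hx
    obtain ⟨j, t, ht, rfl⟩ := mem_iUnion.1 hx
    have hL2 : 0 < L / 2 := by positivity
    filter_upwards [Ioo_mem_nhdsGT hL2] with r hr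
    have hrL : r / L ≤ 1 / 2 := by
      rw [div_le_iff₀ hL]
      linarith [hr.2]
    rw [hμle, pow_one, mul_assoc]
    refine le_add_right (le_add_left ?_)
    gcongr
    refine (le_map_curve_closedBall hL (hγmeas j) (hγup j) (hflow j) ht hr.1 hrL).trans ?_
    rw [hμ₁, Measure.finsetSum_apply]
    exact Finset.single_le_sum (f := fun j => Measure.map (γ j)
      ((volume.restrict (Icc (0:ℝ) 1)).withDensity fun t => ENNReal.ofReal (f j t))
      (closedBall _ r)) (fun _ _ => zero_le) (Finset.mem_univ j)
  have up1 : ∀ x r, μ₁ (closedBall x r) ≤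
      (k * (ENNReal.ofReal A₀ * ENNReal.ofReal (4 / c))) * ENNReal.ofReal r := by
    intro x r
    rw [hμ₁, Measure.finsetSum_apply]
    refine (Finset.sum_le_sum fun j _ =>
      map_curve_closedBall_le hc (hγmeas j) (hγlow j) (hfup j) x r).trans ?_
    simp [mul_assoc]
  have up2 : ∀ x r, 0 ≤ r → μ₂ (closedBall x r) ≤
      ENNReal.ofReal A₀ * volume (ball (0 : EuclideanSpace ℝ (Fin 2)) 1) *
        ENNReal.ofReal (r ^ 2) := by
    intro x r hr
    rw [hμ₂]
    exact withDensity_closedBall_le hp₂up x hr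
  have hRclosed : IsClosed R := by
    rw [hR]
    refine (isCompact_iUnion fun j => isCompact_Icc.image_of_continuousOn ?_).isClosed
    refine (LipschitzOnWith.of_dist_le_mul (K := ⟨L, hL.le⟩) fun s hs t ht => ?_).continuousOn
    rw [dist_eq_norm, Real.dist_eq]
    exact hγup j s hs t ht
  have hμ₁supp : μ₁ Rᶜ = 0 := by
    rw [hμ₁, Measure.finsetSum_apply]
    refine Finset.sum_eq_zero fun j _ => ?_
    have hm : MeasurableSet (γ j ⁻¹' Rᶜ) := hγmeas j hRclosed.measurableSet.compl
    rw [Measure.map_apply (hγmeas j) hRclosed.measurableSet.compl]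
    refine withDensity_absolutelyContinuous _ _ ?_
    rw [Measure.restrict_apply hm]
    convert measure_empty (μ := (volume : Measure ℝ))
    refine eq_empty_of_forall_notMem fun t ht => ht.1 ?_
    rw [hR]
    exact mem_iUnion.2 ⟨j, t, ht.2, rfl⟩
  have hB : volume (ball (0 : EuclideanSpace ℝ (Fin 2)) 1) ≠ ⊤ := measure_ball_lt_top.ne
  have partA : ∀ x ∈ A, ∀ s : ℕ, 0 < s →
      Tendsto (fun r : ℝ => μ (closedBall x r) / ENNReal.ofReal (r ^ s)) (𝓝[>] (0:ℝ)) (𝓝 ⊤) :=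
    fun x hx s hs => tendsto_ratio_top hs hπ₀a (lowA x hx)
  have partR1 : ∀ x ∈ R \ A,
      Filter.limsup (fun r : ℝ => μ (closedBall x r) / ENNReal.ofReal (r ^ 1))
        (𝓝[>] (0:ℝ)) < ⊤ := by
    intro x hx
    refine limsup_ratio_lt_top
      (C := ENNReal.ofReal π₁ * (k * (ENNReal.ofReal A₀ * ENNReal.ofReal (4 / c))) +
        ENNReal.ofReal π₂ *
          (ENNReal.ofReal A₀ * volume (ball (0 : EuclideanSpace ℝ (Fin 2)) 1))) ?_ ?_
    · finiteness
    filter_upwards [hpos, hsmall,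
      eventually_measure_closedBall_eq_zero hAfin.isClosed hμ₀supp hx.2] with r h0 h1 h2
    rw [hμle, h2, mul_zero, zero_add, add_mul, pow_one, mul_assoc, mul_assoc (ENNReal.ofReal π₂)]
    gcongr
    · exact up1 x r
    · refine (up2 x r h0.le).trans ?_
      gcongr
      nlinarith
  have partR2 : ∀ x ∈ R,
      Tendsto (fun r : ℝ => μ (closedBall x r) / ENNReal.ofReal (r ^ 2)) (𝓝[>] (0:ℝ)) (𝓝 ⊤) :=
    fun x hx => tendsto_ratio_top one_lt_two (by simp [hπ₁, ha₀, hL]) (lowR x hx)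
  have partO : ∀ x ∉ A ∪ R,
      Filter.limsup (fun r : ℝ => μ (closedBall x r) / ENNReal.ofReal (r ^ 2))
        (𝓝[>] (0:ℝ)) < ⊤ := by
    intro x hx
    rw [mem_union, not_or] at hx
    refine limsup_ratio_lt_top (C := ENNReal.ofReal π₂ *
      (ENNReal.ofReal A₀ * volume (ball (0 : EuclideanSpace ℝ (Fin 2)) 1))) ?_ ?_
    · finiteness
    filter_upwards [hpos, eventually_measure_closedBall_eq_zero hAfin.isClosed hμ₀supp hx.1,
      eventually_measure_closedBall_eq_zero hRclosed hμ₁supp hx.2] with r h0 h1 h2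
    rw [hμle, h1, h2, mul_zero, mul_zero, zero_add, zero_add, mul_assoc]
    gcongr
    exact up2 x r h0.le
  have part0 : ∀ x, Filter.limsup (fun r : ℝ => μ (closedBall x r) / ENNReal.ofReal (r ^ 0))
      (𝓝[>] (0:ℝ)) < ⊤ := by
    intro x
    refine limsup_ratio_lt_top (C := μ univ) ?_ (Eventually.of_forall fun r => ?_)
    · rw [hμle]
      finiteness
    · simpa using measure_mono (subset_univ _)
  have ntop : ∀ {x s}, Tendsto (fun r : ℝ => μ (closedBall x r) / ENNReal.ofReal (r ^ s))
      (𝓝[>] (0:ℝ)) (𝓝 ⊤) →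
      ¬ Filter.limsup (fun r : ℝ => μ (closedBall x r) / ENNReal.ofReal (r ^ s))
        (𝓝[>] (0:ℝ)) < ⊤ := fun h => by simp [h.limsup_eq]
  refine ⟨fun x => ⟨fun hx => ?_, fun hx => ?_, fun hx => ?_⟩,
    fun x hx => ⟨partA x hx 1 one_pos, partA x hx 2 two_pos⟩,
    fun x hx => ⟨partR1 x hx, partR2 x hx.1⟩, partO⟩
  · symm
    apply IsGreatest.csSup_eq
    refine ⟨⟨zero_le, part0 x⟩, fun s hs => ?_⟩
    by_contra hne
    exact ntop (partA x hx s (by omega)) hs.2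
  · symm
    apply IsGreatest.csSup_eq
    refine ⟨⟨one_le_two, partR1 x hx⟩, fun s hs => ?_⟩
    by_contra hne
    obtain rfl : s = 2 := by have := hs.1; omega
    exact ntop (partR2 x hx.1) hs.2
  · symm
    apply IsGreatest.csSup_eq
    exact ⟨⟨le_rfl, partO x hx⟩, fun s hs => hs.1⟩
end

section
/- Let μ be a probability measure on ℝ² and x ∈ ℝ². If μ(closedBall(x,r))/r² → ∞ as r → 0⁺, then (1/h²)·∫ K(‖x − y‖/h) dμ(y) → ∞ as h → 0⁺. -/
/-!
The kernel is at least `K (1/2) > 0` on `[0, 1/2]`, so the integral is at least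
`K (1/2) * μ (closedBall x (h / 2))`. Dividing by `h ^ 2 = 4 * (h / 2) ^ 2` bounds the expected
estimator below by `K (1/2) / 4` times the density ratio at radius `h / 2`, which tends to `⊤`.
-/

open MeasureTheory Filter Metric Set Topology

/-- if `μ(closedBall(x,r))/r² → ∞` as `r → 0⁺`, then the expected KDE
`(1/h²)·∫ K(‖x − y‖/h) dμ(y) → ∞` as `h → 0⁺`. -/
theorem kde_expectation_diverges_of_infinite_two_dim_density
    (K : ℝ → ℝ) (hK0 : ∀ t, 0 ≤ K t)
    (hKmono : ∀ s ∈ Icc (0:ℝ) 1, ∀ t ∈ Icc (0:ℝ) 1, s ≤ t → K t ≤ K s)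
    (hK1 : ∀ t : ℝ, 1 < t → K t = 0) (hKhalf : 0 < K (1/2))
    (μ : Measure (EuclideanSpace ℝ (Fin 2))) [IsProbabilityMeasure μ]
    (x : EuclideanSpace ℝ (Fin 2))
    (hx : Tendsto (fun r : ℝ => μ (closedBall x r) / ENNReal.ofReal (r ^ 2))
      (𝓝[>] (0:ℝ)) (𝓝 ⊤)) :
    Tendsto (fun h : ℝ =>
        ENNReal.ofReal (1 / h ^ 2) * ∫⁻ y, ENNReal.ofReal (K (‖x - y‖ / h)) ∂μ)
      (𝓝[>] (0:ℝ)) (𝓝 ⊤) := by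
  have hhalf : Tendsto (fun h : ℝ => h / 2) (𝓝[>] (0:ℝ)) (𝓝[>] (0:ℝ)) := by
    refine tendsto_nhdsWithin_iff.2 ⟨?_, ?_⟩
    · have : Tendsto (fun h : ℝ => h / 2) (𝓝 0) (𝓝 (0 / 2)) := tendsto_id.div_const 2
      rw [zero_div] at this
      exact this.mono_left nhdsWithin_le_nhds
    · filter_upwards [self_mem_nhdsWithin] with h hh
      exact half_pos (mem_Ioi.1 hh)
  -- The factor `1 / 4` compensates for measuring balls of radius `h / 2` against `h ^ 2`.
  have hlow : Tendsto (fun h : ℝ => ENNReal.ofReal (K (1/2) / 4) *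
      (μ (closedBall x (h / 2)) / ENNReal.ofReal ((h / 2) ^ 2))) (𝓝[>] (0:ℝ)) (𝓝 ⊤) := by
    have hc : ENNReal.ofReal (K (1/2) / 4) ≠ 0 := by
      rw [Ne, ENNReal.ofReal_eq_zero, not_le]
      positivity
    have := ENNReal.Tendsto.const_mul (a := ENNReal.ofReal (K (1/2) / 4))
      (hx.comp hhalf) (Or.inl ENNReal.top_ne_zero)
    rwa [ENNReal.mul_top hc] at this
  refine tendsto_nhds_top_mono hlow ?_
  filter_upwards [self_mem_nhdsWithin] with h hh
  have hpos : (0:ℝ) < h := hh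
  have hint : ENNReal.ofReal (K (1/2)) * μ (closedBall x (h / 2))
      ≤ ∫⁻ y, ENNReal.ofReal (K (‖x - y‖ / h)) ∂μ := by
    rw [← setLIntegral_const]
    refine le_trans (setLIntegral_mono' measurableSet_closedBall fun y hy => ?_)
      (setLIntegral_le_lintegral (closedBall x (h / 2)) _)
    have hy' : ‖x - y‖ / h ≤ 1 / 2 := by
      rw [mem_closedBall', dist_eq_norm] at hy
      rw [div_le_iff₀ hpos]
      linarith
    exact ENNReal.ofReal_le_ofReal
      (hKmono _ ⟨by positivity, by linarith⟩ _ ⟨by norm_num, by norm_num⟩ hy')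
  calc ENNReal.ofReal (K (1/2) / 4) *
        (μ (closedBall x (h / 2)) / ENNReal.ofReal ((h / 2) ^ 2))
      = ENNReal.ofReal (1 / h ^ 2) *
          (ENNReal.ofReal (K (1/2)) * μ (closedBall x (h / 2))) := by
        rw [div_eq_mul_inv (μ _), ← ENNReal.ofReal_inv_of_pos (by positivity), mul_comm (μ _),
          ← mul_assoc, ← mul_assoc, ← ENNReal.ofReal_mul (by positivity),
          ← ENNReal.ofReal_mul (by positivity)]
        congr 2
        field_simp
        norm_num
    _ ≤ _ := by gcongr
end

section
/- Let L > 0 and let γ : [0,1] → ℝ² be L-Lipschitz. Let f : [0,1] → ℝ be measurable with f(t) ≥ a₀ > 0 for all t ∈ [0,1], let λ be Lebesgue measure on [0,1], and let ν = γ_*(f·λ) be the pushforward of the measure with density f. Then for every t₀ ∈ [0,1] and every r with 0 < r ≤ L/2, ν(closedBall(γ(t₀), r)) ≥ a₀·r/L. Consequently ν(closedBall(γ(t₀), r))/r² → ∞ as r → 0⁺. -/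
/-!
A parameter interval `J ⊆ [0,1]` of length `r / L` containing `t₀` is mapped by the `L`-Lipschitz
curve into the closed ball of radius `r` about `γ t₀`; such a `J` exists because `r / L ≤ 1/2`, so
there is room either to the right or to the left of `t₀`. As the density is at least `a₀` on `J`,
the ball has mass at least `a₀ * r / L`. Dividing by `r ^ 2` leaves at least `(a₀ / L) * r⁻¹`, which
is unbounded as `r → 0⁺`.
-/

open MeasureTheory Filter Metric Set Topology

/-- for a Lipschitz curve `γ` and `ν = γ_*(f·λ)` with `f ≥ a₀ > 0`,
`ν(closedBall(γ(t₀), r)) ≥ a₀·r/L` for `0 < r ≤ L/2`, and consequently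
`ν(closedBall(γ(t₀), r))/r² → ∞` as `r → 0⁺`. -/
theorem pushforward_curve_measure_ball_lower_bound
    (L a₀ : ℝ) (hL : 0 < L) (ha₀ : 0 < a₀)
    (γ : ℝ → EuclideanSpace ℝ (Fin 2))
    (hγ : LipschitzOnWith (Real.toNNReal L) γ (Icc 0 1))
    (hγm : Measurable γ)
    (f : ℝ → ℝ) (hf : Measurable f) (hfa : ∀ t ∈ Icc (0:ℝ) 1, a₀ ≤ f t)
    (ν : Measure (EuclideanSpace ℝ (Fin 2)))
    (hν : ν = Measure.map γ ((volume.restrict (Icc (0:ℝ) 1)).withDensity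
      fun t => ENNReal.ofReal (f t))) :
    (∀ t₀ ∈ Icc (0:ℝ) 1, ∀ r : ℝ, 0 < r → r ≤ L / 2 →
        ENNReal.ofReal (a₀ * r / L) ≤ ν (closedBall (γ t₀) r)) ∧
    (∀ t₀ ∈ Icc (0:ℝ) 1,
        Tendsto (fun r : ℝ => ν (closedBall (γ t₀) r) / ENNReal.ofReal (r ^ 2))
          (𝓝[>] (0:ℝ)) (𝓝 ⊤)) := by
  have lower : ∀ t₀ ∈ Icc (0:ℝ) 1, ∀ r : ℝ, 0 < r → r ≤ L / 2 →
      ENNReal.ofReal (a₀ * r / L) ≤ ν (closedBall (γ t₀) r) := by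
    intro t₀ ht₀ r hr hrL
    have hd : 0 < r / L := div_pos hr hL
    have hd2 : r / L ≤ 1 / 2 := by
      rw [div_le_iff₀ hL]; linarith
    have hdL : L * (r / L) = r := by field_simp
    -- The interval starts at `t₀` if `t₀ ≤ 1/2` and ends at `t₀` otherwise.
    obtain ⟨c, hc0, hc1, hct, htc⟩ :
        ∃ c : ℝ, 0 ≤ c ∧ c + r / L ≤ 1 ∧ c ≤ t₀ ∧ t₀ ≤ c + r / L := by
      rcases le_total t₀ (1 / 2) with h | h
      · exact ⟨t₀, ht₀.1, by linarith, le_rfl, by linarith⟩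
      · exact ⟨t₀ - r / L, by linarith, by linarith [ht₀.2], by linarith, by linarith⟩
    have hJ : Icc c (c + r / L) ⊆ Icc (0:ℝ) 1 := Icc_subset_Icc hc0 hc1
    have hball : Icc c (c + r / L) ⊆ γ ⁻¹' closedBall (γ t₀) r := by
      intro t ht
      have h1 := hγ.dist_le_mul t (hJ ht) t₀ ht₀
      rw [Real.coe_toNNReal L hL.le] at h1
      have h2 : dist t t₀ ≤ r / L := by
        rw [Real.dist_eq, abs_le]
        constructor <;> linarith [ht.1, ht.2]
      exact h1.trans ((mul_le_mul_of_nonneg_left h2 hL.le).trans_eq hdL)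
    rw [hν, Measure.map_apply hγm measurableSet_closedBall]
    refine le_trans ?_ (measure_mono hball)
    rw [withDensity_apply _ measurableSet_Icc, Measure.restrict_restrict measurableSet_Icc,
      inter_eq_left.2 hJ]
    calc ENNReal.ofReal (a₀ * r / L)
        = ∫⁻ _ in Icc c (c + r / L), ENNReal.ofReal a₀ := by
          rw [setLIntegral_const, Real.volume_Icc, ← ENNReal.ofReal_mul ha₀.le]
          congr 1
          ring
      _ ≤ ∫⁻ t in Icc c (c + r / L), ENNReal.ofReal (f t) :=
          setLIntegral_mono hf.ennreal_ofReal
            fun t ht => ENNReal.ofReal_le_ofReal (hfa t (hJ ht))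
  refine ⟨lower, fun t₀ ht₀ => ?_⟩
  have hlim : Tendsto (fun r : ℝ => ENNReal.ofReal (a₀ / L * r⁻¹)) (𝓝[>] (0:ℝ)) (𝓝 ⊤) :=
    ENNReal.tendsto_ofReal_atTop.comp
      (tendsto_inv_nhdsGT_zero.const_mul_atTop (div_pos ha₀ hL))
  refine tendsto_nhds_top_mono hlim ?_
  filter_upwards [Ioc_mem_nhdsGT (half_pos hL)] with r hr
  have hr0 : 0 < r := hr.1
  have heq : a₀ / L * r⁻¹ = a₀ * r / L / r ^ 2 := by field_simp
  rw [heq, ENNReal.ofReal_div_of_pos (by positivity)]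
  exact ENNReal.div_le_div_right (lower t₀ ht₀ r hr0 hr.2) _
end

section
/- For every x ∈ R \ A the following three properties hold: (i) μ({x}) = 0; (ii) limsup_{r→0⁺} μ(closedBall(x,r))/(2r) ≤ π₁·k·A₀/c < ∞; and (iii) μ(closedBall(x,r))/(π·r²) → ∞ as r → 0⁺. That is, points on a road that are not anchor points have finite positive-bounded one-dimensional Hausdorff density behavior, carry no atom, and have infinite two-dimensional Hausdorff density. -/
open MeasureTheory Filter Metric Set Topology

/-!
A bi-Lipschitz road spends a parameter time of at most `2r/c` inside any ball of radius `r`, because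
two such times `s`, `t` satisfy `c * |s - t| ≤ 2r` (`road_mass_closedBall_le`). A ball centred on the
road contains the image of a one-sided parameter interval of length `r/L`, as soon as this length is
at most `1/2` (`le_road_mass_closedBall`). Hence the road component of a ball of radius `r` has mass
of order exactly `r`. The planar component has mass at most `A₀ * π * r²`, which is negligible
against `r`, and the anchor component vanishes on small balls around a point outside the finite
set `A`. The absence of an atom is the upper bound at radius `0`, and the two density claims follow
by dividing by `2r` and by `π * r²`.
-/

/-- The upper bound for one road. The centre `x` need not lie on the road. -/
theorem road_mass_closedBall_le {A₀ c : ℝ} (hA₀ : 0 ≤ A₀) (hc : 0 < c)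
    {γ : ℝ → EuclideanSpace ℝ (Fin 2)} (hγ : Measurable γ)
    (hlow : ∀ s ∈ Icc (0:ℝ) 1, ∀ t ∈ Icc (0:ℝ) 1, c * |s - t| ≤ ‖γ s - γ t‖)
    {f : ℝ → ℝ} (hfup : ∀ t ∈ Icc (0:ℝ) 1, f t ≤ A₀)
    (x : EuclideanSpace ℝ (Fin 2)) (r : ℝ) :
    Measure.map γ ((volume.restrict (Icc (0:ℝ) 1)).withDensity fun t => ENNReal.ofReal (f t))
      (closedBall x r) ≤ ENNReal.ofReal (A₀ * (2 * r / c)) := by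
  have hms : MeasurableSet (γ ⁻¹' closedBall x r) := hγ measurableSet_closedBall
  rw [Measure.map_apply hγ measurableSet_closedBall, withDensity_apply _ hms,
    Measure.restrict_restrict hms, ENNReal.ofReal_mul hA₀]
  have hvol : volume (γ ⁻¹' closedBall x r ∩ Icc (0:ℝ) 1) ≤ ENNReal.ofReal (2 * r / c) := by
    refine (Real.volume_le_diam _).trans (ediam_le ?_)
    rintro s ⟨hs, hs'⟩ t ⟨ht, ht'⟩
    rw [edist_dist]
    apply ENNReal.ofReal_le_ofReal
    rw [le_div_iff₀ hc, Real.dist_eq, mul_comm]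
    refine (hlow s hs' t ht').trans ?_
    rw [← dist_eq_norm]
    have h1 : dist (γ s) x ≤ r := hs
    have h2 : dist (γ t) x ≤ r := ht
    linarith [dist_triangle_right (γ s) (γ t) x]
  calc ∫⁻ t in γ ⁻¹' closedBall x r ∩ Icc (0:ℝ) 1, ENNReal.ofReal (f t)
      ≤ ∫⁻ _ in γ ⁻¹' closedBall x r ∩ Icc (0:ℝ) 1, ENNReal.ofReal A₀ :=
        setLIntegral_mono' (hms.inter measurableSet_Icc)
          fun t ht => ENNReal.ofReal_le_ofReal (hfup t ht.2)
    _ = ENNReal.ofReal A₀ * volume (γ ⁻¹' closedBall x r ∩ Icc (0:ℝ) 1) := setLIntegral_const _ _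
    _ ≤ _ := by gcongr

/-- The lower bound for one road, at a centre `γ s` on it. -/
theorem le_road_mass_closedBall {a₀ L : ℝ} (ha₀ : 0 ≤ a₀) (hL : 0 < L)
    {γ : ℝ → EuclideanSpace ℝ (Fin 2)} (hγ : Measurable γ)
    (hup : ∀ s ∈ Icc (0:ℝ) 1, ∀ t ∈ Icc (0:ℝ) 1, ‖γ s - γ t‖ ≤ L * |s - t|)
    {f : ℝ → ℝ} (hflow : ∀ t ∈ Icc (0:ℝ) 1, a₀ ≤ f t)
    {s : ℝ} (hs : s ∈ Icc (0:ℝ) 1) {r : ℝ} (hr : r / L ≤ 1 / 2) :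
    ENNReal.ofReal (a₀ * (r / L)) ≤
      Measure.map γ ((volume.restrict (Icc (0:ℝ) 1)).withDensity fun t => ENNReal.ofReal (f t))
        (closedBall (γ s) r) := by
  have hms : MeasurableSet (γ ⁻¹' closedBall (γ s) r) := hγ measurableSet_closedBall
  rw [Measure.map_apply hγ measurableSet_closedBall, withDensity_apply _ hms,
    Measure.restrict_restrict hms, ENNReal.ofReal_mul ha₀]
  -- One of the two one-sided intervals at `s` stays inside `[0, 1]`, as `r / L ≤ 1 / 2`.
  have hvol : ENNReal.ofReal (r / L) ≤ volume (γ ⁻¹' closedBall (γ s) r ∩ Icc (0:ℝ) 1) := by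
    have key : ∀ t ∈ Icc (0:ℝ) 1, |t - s| ≤ r / L →
        t ∈ γ ⁻¹' closedBall (γ s) r ∩ Icc (0:ℝ) 1 := by
      intro t ht hts
      refine ⟨?_, ht⟩
      rw [mem_preimage, mem_closedBall, dist_eq_norm]
      rw [le_div_iff₀ hL] at hts
      linarith [hup t ht s hs]
    obtain ⟨hs0, hs1⟩ := hs
    rcases le_total s (1 / 2) with h | h
    · calc ENNReal.ofReal (r / L) = volume (Icc s (s + r / L)) := by
            rw [Real.volume_Icc]; congr 1; ring
        _ ≤ _ := measure_mono fun t ht => key t ⟨by linarith [ht.1], by linarith [ht.2]⟩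
            (abs_le.2 ⟨by linarith [ht.1, ht.2], by linarith [ht.2]⟩)
    · calc ENNReal.ofReal (r / L) = volume (Icc (s - r / L) s) := by
            rw [Real.volume_Icc]; congr 1; ring
        _ ≤ _ := measure_mono fun t ht => key t ⟨by linarith [ht.1], by linarith [ht.2]⟩
            (abs_le.2 ⟨by linarith [ht.1], by linarith [ht.1, ht.2]⟩)
  calc ENNReal.ofReal a₀ * ENNReal.ofReal (r / L)
      ≤ ENNReal.ofReal a₀ * volume (γ ⁻¹' closedBall (γ s) r ∩ Icc (0:ℝ) 1) := by gcongr
    _ = ∫⁻ _ in γ ⁻¹' closedBall (γ s) r ∩ Icc (0:ℝ) 1, ENNReal.ofReal a₀ :=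
        (setLIntegral_const _ _).symm
    _ ≤ _ := setLIntegral_mono' (hms.inter measurableSet_Icc)
          fun t ht => ENNReal.ofReal_le_ofReal (hflow t ht.2)

theorem planar_mass_closedBall_le {A₀ : ℝ} (hA₀ : 0 ≤ A₀)
    {p : EuclideanSpace ℝ (Fin 2) → ℝ} (hp : ∀ x, p x ≤ A₀)
    (x : EuclideanSpace ℝ (Fin 2)) {r : ℝ} (hr : 0 ≤ r) :
    (volume.withDensity fun x => ENNReal.ofReal (p x)) (closedBall x r)
      ≤ ENNReal.ofReal (A₀ * (Real.pi * r ^ 2)) := by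
  have hball : volume (closedBall x r) = ENNReal.ofReal (Real.pi * r ^ 2) := by
    rw [EuclideanSpace.volume_closedBall_fin_two, ← ENNReal.ofReal_pow hr, mul_comm Real.pi,
      ENNReal.ofReal_mul (by positivity)]
  rw [withDensity_apply _ measurableSet_closedBall, ENNReal.ofReal_mul hA₀, ← hball]
  calc ∫⁻ y in closedBall x r, ENNReal.ofReal (p y)
      ≤ ∫⁻ _ in closedBall x r, ENNReal.ofReal A₀ :=
        lintegral_mono fun y => ENNReal.ofReal_le_ofReal (hp y)
    _ = _ := setLIntegral_const _ _

/-- every point `x ∈ R \ A` carries no atom, has bounded one-dimensional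
Hausdorff density (`limsup_{r→0⁺} μ(B̄(x,r))/(2r) ≤ π₁·k·A₀/c`), and infinite
two-dimensional Hausdorff density (`μ(B̄(x,r))/(π·r²) → ∞`). -/
theorem road_points_hausdorff_density
    (a₀ A₀ c L π₀ π₁ π₂ : ℝ)
    (ha₀ : 0 < a₀) (ha₀A₀ : a₀ ≤ A₀) (hc : 0 < c) (hcL : c ≤ L)
    (hπ₀ : 0 < π₀) (hπ₁ : 0 < π₁) (hπ₂ : 0 < π₂) (hπsum : π₀ + π₁ + π₂ = 1)
    (A : Set (EuclideanSpace ℝ (Fin 2))) (hAfin : A.Finite) (hAne : A.Nonempty)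
    (μ₀ : Measure (EuclideanSpace ℝ (Fin 2))) [IsProbabilityMeasure μ₀]
    (hμ₀supp : μ₀ Aᶜ = 0)
    (hμ₀atom : ∀ a ∈ A, ENNReal.ofReal a₀ ≤ μ₀ {a})
    (k : ℕ) (γ : Fin k → ℝ → EuclideanSpace ℝ (Fin 2))
    (hγmeas : ∀ j, Measurable (γ j))
    (hγlow : ∀ j, ∀ s ∈ Icc (0:ℝ) 1, ∀ t ∈ Icc (0:ℝ) 1, c * |s - t| ≤ ‖γ j s - γ j t‖)
    (hγup : ∀ j, ∀ s ∈ Icc (0:ℝ) 1, ∀ t ∈ Icc (0:ℝ) 1, ‖γ j s - γ j t‖ ≤ L * |s - t|)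
    (R : Set (EuclideanSpace ℝ (Fin 2))) (hR : R = ⋃ j, γ j '' Icc (0:ℝ) 1)
    (hAR : A ⊆ R)
    (f : Fin k → ℝ → ℝ) (hfmeas : ∀ j, Measurable (f j))
    (hflow : ∀ j, ∀ t ∈ Icc (0:ℝ) 1, a₀ ≤ f j t)
    (hfup : ∀ j, ∀ t ∈ Icc (0:ℝ) 1, f j t ≤ A₀)
    (μ₁ : Measure (EuclideanSpace ℝ (Fin 2))) [IsProbabilityMeasure μ₁]
    (hμ₁ : μ₁ = ∑ j : Fin k, Measure.map (γ j)
      ((volume.restrict (Icc (0:ℝ) 1)).withDensity fun t => ENNReal.ofReal (f j t)))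
    (p₂ : EuclideanSpace ℝ (Fin 2) → ℝ) (hp₂meas : Measurable p₂)
    (hp₂low : ∀ x, 0 ≤ p₂ x) (hp₂up : ∀ x, p₂ x ≤ A₀)
    (μ₂ : Measure (EuclideanSpace ℝ (Fin 2))) [IsProbabilityMeasure μ₂]
    (hμ₂ : μ₂ = volume.withDensity fun x => ENNReal.ofReal (p₂ x))
    (μ : Measure (EuclideanSpace ℝ (Fin 2)))
    (hμ : μ = ENNReal.ofReal π₀ • μ₀ + ENNReal.ofReal π₁ • μ₁ + ENNReal.ofReal π₂ • μ₂)
    :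
    ∀ x ∈ R \ A,
      μ {x} = 0 ∧
      Filter.limsup (fun r : ℝ => μ (closedBall x r) / ENNReal.ofReal (2 * r))
        (𝓝[>] (0:ℝ)) ≤ ENNReal.ofReal (π₁ * k * A₀ / c) ∧
      Tendsto (fun r : ℝ => μ (closedBall x r) / ENNReal.ofReal (Real.pi * r ^ 2))
        (𝓝[>] (0:ℝ)) (𝓝 ⊤) := by
  rintro x ⟨hxR, hxA⟩
  have hA₀ : 0 < A₀ := ha₀.trans_le ha₀A₀
  have hL : 0 < L := hc.trans_le hcL
  have hupper : ∀ r : ℝ, 0 ≤ r → μ₀ (closedBall x r) = 0 → μ (closedBall x r) ≤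
      ENNReal.ofReal (2 * r * (π₁ * k * A₀ / c + π₂ * A₀ * Real.pi * r / 2)) := by
    intro r hr h0
    have h1 : μ₁ (closedBall x r) ≤ ENNReal.ofReal (k * (A₀ * (2 * r / c))) := by
      rw [hμ₁, Measure.finsetSum_apply]
      refine (Finset.sum_le_sum fun j _ =>
        road_mass_closedBall_le hA₀.le hc (hγmeas j) (hγlow j) (hfup j) x r).trans ?_
      rw [Finset.sum_const, Finset.card_univ, Fintype.card_fin, nsmul_eq_mul,
        ENNReal.ofReal_mul (Nat.cast_nonneg k), ENNReal.ofReal_natCast]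
    have h2 : μ₂ (closedBall x r) ≤ ENNReal.ofReal (A₀ * (Real.pi * r ^ 2)) := by
      rw [hμ₂]
      exact planar_mass_closedBall_le hA₀.le hp₂up x hr
    calc μ (closedBall x r)
        = ENNReal.ofReal π₁ * μ₁ (closedBall x r) + ENNReal.ofReal π₂ * μ₂ (closedBall x r) := by
          simp [hμ, h0]
      _ ≤ ENNReal.ofReal π₁ * ENNReal.ofReal (k * (A₀ * (2 * r / c)))
          + ENNReal.ofReal π₂ * ENNReal.ofReal (A₀ * (Real.pi * r ^ 2)) := by gcongr
      _ = ENNReal.ofReal (2 * r * (π₁ * k * A₀ / c + π₂ * A₀ * Real.pi * r / 2)) := by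
          rw [← ENNReal.ofReal_mul hπ₁.le, ← ENNReal.ofReal_mul hπ₂.le,
            ← ENNReal.ofReal_add (by positivity) (by positivity)]
          congr 1
          field_simp
  refine ⟨?_, ?_, ?_⟩
  · have h0 : μ₀ (closedBall x 0) = 0 := by
      rw [closedBall_zero]
      exact measure_mono_null (by simpa using hxA) hμ₀supp
    simpa using hupper 0 le_rfl h0
  · have hball : ∀ᶠ r : ℝ in 𝓝[>] 0, closedBall x r ⊆ Aᶜ :=
      nhdsWithin_le_nhds (eventually_closedBall_subset (hAfin.isClosed.isOpen_compl.mem_nhds hxA))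
    have hle : ∀ᶠ r : ℝ in 𝓝[>] 0, μ (closedBall x r) / ENNReal.ofReal (2 * r) ≤
        ENNReal.ofReal (π₁ * k * A₀ / c + π₂ * A₀ * Real.pi * r / 2) := by
      filter_upwards [hball, self_mem_nhdsWithin] with r hr hr0
      have hr0 : 0 < r := hr0
      refine ENNReal.div_le_of_le_mul ?_
      rw [mul_comm, ← ENNReal.ofReal_mul (by positivity)]
      exact hupper r hr0.le (measure_mono_null hr hμ₀supp)
    have hlim : Tendsto (fun r : ℝ =>
        ENNReal.ofReal (π₁ * k * A₀ / c + π₂ * A₀ * Real.pi * r / 2)) (𝓝[>] 0)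
        (𝓝 (ENNReal.ofReal (π₁ * k * A₀ / c))) := by
      have hcont : Continuous fun r : ℝ =>
          ENNReal.ofReal (π₁ * k * A₀ / c + π₂ * A₀ * Real.pi * r / 2) :=
        ENNReal.continuous_ofReal.comp (by fun_prop)
      simpa using (hcont.tendsto 0).mono_left nhdsWithin_le_nhds
    exact (limsup_le_limsup hle).trans_eq hlim.limsup_eq
  · rw [hR] at hxR
    obtain ⟨j, s, hs, rfl⟩ := mem_iUnion.1 hxR
    have hsmall : ∀ᶠ r : ℝ in 𝓝[>] 0, r / L ≤ 1 / 2 := by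
      have hcont : Continuous fun r : ℝ => r / L := by fun_prop
      exact nhdsWithin_le_nhds
        ((hcont.tendsto 0).eventually (ge_mem_nhds (by simp)))
    have hge : ∀ᶠ r : ℝ in 𝓝[>] 0, ENNReal.ofReal (π₁ * a₀ / (L * Real.pi) * r⁻¹) ≤
        μ (closedBall (γ j s) r) / ENNReal.ofReal (Real.pi * r ^ 2) := by
      filter_upwards [hsmall, self_mem_nhdsWithin] with r hr hr0
      have hr0 : 0 < r := hr0
      have hpi := Real.pi_pos
      have hpos : 0 < Real.pi * r ^ 2 := by positivity
      rw [ENNReal.le_div_iff_mul_le (Or.inl (ENNReal.ofReal_pos.2 hpos).ne')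
        (Or.inl ENNReal.ofReal_ne_top), ← ENNReal.ofReal_mul (by positivity)]
      have h1 : ENNReal.ofReal (a₀ * (r / L)) ≤ μ₁ (closedBall (γ j s) r) := by
        refine (le_road_mass_closedBall ha₀.le hL (hγmeas j) (hγup j) (hflow j) hs hr).trans ?_
        rw [hμ₁, Measure.finsetSum_apply]
        exact Finset.single_le_sum (f := fun i => Measure.map (γ i)
          ((volume.restrict (Icc (0:ℝ) 1)).withDensity fun t => ENNReal.ofReal (f i t))
          (closedBall (γ j s) r)) (fun _ _ => zero_le) (Finset.mem_univ j)
      calc ENNReal.ofReal (π₁ * a₀ / (L * Real.pi) * r⁻¹ * (Real.pi * r ^ 2))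
          = ENNReal.ofReal π₁ * ENNReal.ofReal (a₀ * (r / L)) := by
            rw [← ENNReal.ofReal_mul hπ₁.le]
            congr 1
            field_simp
        _ ≤ ENNReal.ofReal π₁ * μ₁ (closedBall (γ j s) r) := by gcongr
        _ ≤ μ (closedBall (γ j s) r) := by
            simp only [hμ, Measure.add_apply, Measure.smul_apply, smul_eq_mul]
            exact le_add_right le_add_self
    refine tendsto_nhds_top_mono ?_ hge
    exact ENNReal.tendsto_ofReal_atTop.comp
      (tendsto_inv_nhdsGT_zero.const_mul_atTop (by have := Real.pi_pos; positivity))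
end

section
/- Assume additionally that p₂ is continuous at a point x ∉ A ∪ R. Then the two-dimensional Hausdorff density of μ at x exists and equals lim_{r→0⁺} μ(closedBall(x,r))/(π·r²) = π₂·p₂(x) < ∞. -/
/-!
The set `A ∪ R = R` is compact, since it is a finite union of Lipschitz images of `[0,1]`, so small
closed balls around `x ∉ A ∪ R` miss it. As `μ₀` and `μ₁` do not charge the complement of `A ∪ R`
(`curve_measure_eq_zero` for `μ₁`), only the absolutely continuous part `π₂ • μ₂` is seen by
these balls. Its averages converge to `π₂ * p₂ x` by continuity of `p₂` at `x`
(`tendsto_withDensity_closedBall_div`), and `π * r ^ 2` is the area of the ball.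
-/

open MeasureTheory Filter Metric Set Topology

/-- A function is bounded above and below on small balls around a point of continuity by constants
close to its value there, hence so are its averages. -/
lemma tendsto_withDensity_closedBall_div {x : EuclideanSpace ℝ (Fin 2)}
    {g : EuclideanSpace ℝ (Fin 2) → ENNReal} (hg : ContinuousAt g x) :
    Tendsto (fun r : ℝ => (volume.withDensity g) (closedBall x r) / volume (closedBall x r))
      (𝓝[>] (0:ℝ)) (𝓝 (g x)) := by
  have hball : ∀ {p : EuclideanSpace ℝ (Fin 2) → Prop}, (∀ᶠ y in 𝓝 x, p y) →
      ∀ᶠ r : ℝ in 𝓝[>] (0:ℝ), ∀ y ∈ closedBall x r, p y := by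
    intro p hp
    obtain ⟨ε, hε, h⟩ := Metric.eventually_nhds_iff.1 hp
    filter_upwards [Ioo_mem_nhdsGT hε] with r hr y hy
    exact h (lt_of_le_of_lt (mem_closedBall.1 hy) hr.2)
  have hpos : ∀ r : ℝ, r ∈ Ioi (0:ℝ) → volume (closedBall x r) ≠ 0 := fun r hr =>
    (measure_closedBall_pos volume x hr).ne'
  have hfin : ∀ r : ℝ, volume (closedBall x r) ≠ ⊤ := fun r => measure_closedBall_lt_top.ne
  rw [tendsto_order]
  constructor
  · intro a ha
    obtain ⟨b, hab, hb⟩ := exists_between ha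
    filter_upwards [hball (hg.eventually_const_lt hb), self_mem_nhdsWithin] with r hr hr0
    refine hab.trans_le ?_
    rw [ENNReal.le_div_iff_mul_le (Or.inl (hpos r hr0)) (Or.inl (hfin r)),
      withDensity_apply _ measurableSet_closedBall, ← setLIntegral_const]
    exact setLIntegral_mono' measurableSet_closedBall fun y hy => (hr y hy).le
  · intro a ha
    obtain ⟨b, hb, hab⟩ := exists_between ha
    filter_upwards [hball (hg.eventually_lt_const hb), self_mem_nhdsWithin] with r hr hr0
    refine lt_of_le_of_lt ?_ hab
    rw [ENNReal.div_le_iff (hpos r hr0) (hfin r),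
      withDensity_apply _ measurableSet_closedBall, ← setLIntegral_const]
    exact setLIntegral_mono' measurableSet_closedBall fun y hy => (hr y hy).le

lemma curve_measure_eq_zero {γ : ℝ → EuclideanSpace ℝ (Fin 2)} (hγ : Measurable γ)
    (d : ℝ → ENNReal) {s : Set (EuclideanSpace ℝ (Fin 2))} (hs : MeasurableSet s)
    (hdisj : ∀ t ∈ Icc (0:ℝ) 1, γ t ∉ s) :
    Measure.map γ ((volume.restrict (Icc (0:ℝ) 1)).withDensity d) s = 0 := by
  rw [Measure.map_apply hγ hs]
  apply withDensity_absolutelyContinuous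
  rw [Measure.restrict_apply (hγ hs)]
  have : γ ⁻¹' s ∩ Icc (0:ℝ) 1 = ∅ := by
    ext t
    simp only [mem_inter_iff, mem_preimage, mem_empty_iff_false, iff_false, not_and]
    exact fun h ht => hdisj t ht h
  rw [this, measure_empty]

/-- if `p₂` is continuous at a point `x ∉ A ∪ R`, then the
two-dimensional Hausdorff density of `μ` at `x` exists and equals `π₂·p₂(x)`:
`μ(B̄(x,r))/(π·r²) → π₂·p₂(x)` as `r → 0⁺`. -/
theorem two_dim_density_at_open_space_point
    (a₀ A₀ c L π₀ π₁ π₂ : ℝ)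
    (ha₀ : 0 < a₀) (ha₀A₀ : a₀ ≤ A₀) (hc : 0 < c) (hcL : c ≤ L)
    (hπ₀ : 0 < π₀) (hπ₁ : 0 < π₁) (hπ₂ : 0 < π₂) (hπsum : π₀ + π₁ + π₂ = 1)
    (A : Set (EuclideanSpace ℝ (Fin 2))) (hAfin : A.Finite) (hAne : A.Nonempty)
    (μ₀ : Measure (EuclideanSpace ℝ (Fin 2))) [IsProbabilityMeasure μ₀]
    (hμ₀supp : μ₀ Aᶜ = 0)
    (hμ₀atom : ∀ a ∈ A, ENNReal.ofReal a₀ ≤ μ₀ {a})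
    (k : ℕ) (γ : Fin k → ℝ → EuclideanSpace ℝ (Fin 2))
    (hγmeas : ∀ j, Measurable (γ j))
    (hγlow : ∀ j, ∀ s ∈ Icc (0:ℝ) 1, ∀ t ∈ Icc (0:ℝ) 1, c * |s - t| ≤ ‖γ j s - γ j t‖)
    (hγup : ∀ j, ∀ s ∈ Icc (0:ℝ) 1, ∀ t ∈ Icc (0:ℝ) 1, ‖γ j s - γ j t‖ ≤ L * |s - t|)
    (R : Set (EuclideanSpace ℝ (Fin 2))) (hR : R = ⋃ j, γ j '' Icc (0:ℝ) 1)
    (hAR : A ⊆ R)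
    (f : Fin k → ℝ → ℝ) (hfmeas : ∀ j, Measurable (f j))
    (hflow : ∀ j, ∀ t ∈ Icc (0:ℝ) 1, a₀ ≤ f j t)
    (hfup : ∀ j, ∀ t ∈ Icc (0:ℝ) 1, f j t ≤ A₀)
    (μ₁ : Measure (EuclideanSpace ℝ (Fin 2))) [IsProbabilityMeasure μ₁]
    (hμ₁ : μ₁ = ∑ j : Fin k, Measure.map (γ j)
      ((volume.restrict (Icc (0:ℝ) 1)).withDensity fun t => ENNReal.ofReal (f j t)))
    (p₂ : EuclideanSpace ℝ (Fin 2) → ℝ) (hp₂meas : Measurable p₂)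
    (hp₂low : ∀ x, 0 ≤ p₂ x) (hp₂up : ∀ x, p₂ x ≤ A₀)
    (μ₂ : Measure (EuclideanSpace ℝ (Fin 2))) [IsProbabilityMeasure μ₂]
    (hμ₂ : μ₂ = volume.withDensity fun x => ENNReal.ofReal (p₂ x))
    (μ : Measure (EuclideanSpace ℝ (Fin 2)))
    (hμ : μ = ENNReal.ofReal π₀ • μ₀ + ENNReal.ofReal π₁ • μ₁ + ENNReal.ofReal π₂ • μ₂)
    (x : EuclideanSpace ℝ (Fin 2)) (hx : x ∉ A ∪ R) (hcont : ContinuousAt p₂ x) :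
    Tendsto (fun r : ℝ => μ (closedBall x r) / ENNReal.ofReal (Real.pi * r ^ 2))
      (𝓝[>] (0:ℝ)) (𝓝 (ENNReal.ofReal (π₂ * p₂ x))) := by
  have hRclosed : IsClosed R := by
    rw [hR]
    refine isClosed_iUnion_of_finite fun j => (isCompact_Icc.image_of_continuousOn ?_).isClosed
    refine (LipschitzOnWith.of_dist_le_mul (K := L.toNNReal) fun s hs t ht => ?_).continuousOn
    rw [dist_eq_norm, Real.dist_eq, Real.coe_toNNReal L (hc.le.trans hcL)]
    exact hγup j s hs t ht
  have hxR : x ∉ R := fun h => hx (Or.inr h)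
  obtain ⟨ε, hε, hεR⟩ := Metric.isOpen_iff.1 hRclosed.isOpen_compl x hxR
  have hg : ContinuousAt (fun y => ENNReal.ofReal (p₂ y)) x :=
    ENNReal.continuous_ofReal.continuousAt.comp hcont
  have hlim := ENNReal.Tendsto.const_mul (a := ENNReal.ofReal π₂)
    (tendsto_withDensity_closedBall_div hg) (Or.inr ENNReal.ofReal_ne_top)
  rw [← ENNReal.ofReal_mul hπ₂.le] at hlim
  refine hlim.congr' ?_
  filter_upwards [Ioo_mem_nhdsGT hε] with r hr
  have hdisj : ∀ y ∈ closedBall x r, y ∉ R := fun y hy =>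
    hεR (closedBall_subset_ball hr.2 hy)
  have h₀ : μ₀ (closedBall x r) = 0 :=
    measure_mono_null (fun y hy hyA => hdisj y hy (hAR hyA)) hμ₀supp
  have h₁ : μ₁ (closedBall x r) = 0 := by
    rw [hμ₁, Measure.finsetSum_apply]
    refine Finset.sum_eq_zero fun j _ =>
      curve_measure_eq_zero (hγmeas j) _ measurableSet_closedBall fun t ht hmem => ?_
    exact hdisj _ hmem (hR ▸ mem_iUnion.2 ⟨j, t, ht, rfl⟩)
  have hvol : volume (closedBall x r) = ENNReal.ofReal (Real.pi * r ^ 2) := by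
    rw [EuclideanSpace.volume_closedBall_fin_two, mul_comm Real.pi,
      ENNReal.ofReal_mul (sq_nonneg r), ENNReal.ofReal_pow hr.1.le]
  rw [hμ, hvol, ← hμ₂]
  simp only [Measure.add_apply, Measure.smul_apply, smul_eq_mul, h₀, h₁, mul_zero, zero_add]
  rw [mul_div_assoc]
end

section
/- Let X₁, …, Xₙ be identically distributed ℝ²-valued random variables with common law μ, and for h > 0 define the kernel density estimator p̂_h(x) = (1/(n·h²))·Σᵢ K(‖x − Xᵢ‖/h). Then for every x ∈ A ∪ R, the expectation E[p̂_h(x)] → ∞ as h → 0⁺. (That is, the kernel density estimator diverges in expectation at every anchor point and at every point on a road.) -/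
/-!
Every anchor lies on a road, so `x = γ j t₀` for some `j` and `t₀ ∈ [0,1]`. The upper Lipschitz bound
sends an interval of length `h / (2L)` around `t₀` into the ball of radius `h / 2` around `x`, so the
road component alone gives that ball mass at least `a₀ h / (2L)` (`road_mass_closedBall`). On this
ball the kernel is at least `K (1/2) > 0`, so a single sample contributes at least a constant times
`h⁻² · h = h⁻¹` to the expectation (`const_mul_measure_le_lintegral_kde`), and `h⁻¹ → ∞`.
-/

open MeasureTheory Filter Metric Set Topology

/-- A measure carried by a Lipschitz curve, with density at least `a₀`, has mass at least linear in
the radius `r` on balls centred on the curve. -/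
lemma road_mass_closedBall {E : Type*} [NormedAddCommGroup E] [MeasurableSpace E]
    [OpensMeasurableSpace E] {a₀ L : ℝ} (hL : 0 < L) {γ : ℝ → E} (hγmeas : Measurable γ)
    (hγup : ∀ s ∈ Icc (0:ℝ) 1, ∀ t ∈ Icc (0:ℝ) 1, ‖γ s - γ t‖ ≤ L * |s - t|)
    {f : ℝ → ℝ} (hflow : ∀ t ∈ Icc (0:ℝ) 1, a₀ ≤ f t)
    {t₀ : ℝ} (ht₀ : t₀ ∈ Icc (0:ℝ) 1) {r : ℝ} (hr : 0 < r) (hrL : r ≤ L) :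
    ENNReal.ofReal a₀ * ENNReal.ofReal (r / L) ≤
      Measure.map γ ((volume.restrict (Icc (0:ℝ) 1)).withDensity fun t => ENNReal.ofReal (f t))
        (closedBall (γ t₀) r) := by
  have hd0 : 0 < r / L := div_pos hr hL
  have hd1 : r / L ≤ 1 := (div_le_one hL).2 hrL
  -- The interval is shifted where necessary to stay inside `[0,1]` while containing `t₀`.
  obtain ⟨u, hu0, hu1, hut, htu⟩ : ∃ u : ℝ, 0 ≤ u ∧ u + r / L ≤ 1 ∧ u ≤ t₀ ∧ t₀ ≤ u + r / L := by
    rcases le_total t₀ (1 - r / L) with h | h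
    · exact ⟨t₀, ht₀.1, by linarith, le_rfl, by linarith⟩
    · exact ⟨1 - r / L, by linarith, by linarith, h, by linarith [ht₀.2]⟩
  have hsub : Icc u (u + r / L) ⊆ Icc (0:ℝ) 1 := Icc_subset_Icc hu0 hu1
  have hball : Icc u (u + r / L) ⊆ γ ⁻¹' closedBall (γ t₀) r := by
    intro t ht
    have h1 : |t - t₀| ≤ r / L := abs_le.2 ⟨by linarith [ht.1], by linarith [ht.2]⟩
    rw [mem_preimage, mem_closedBall, dist_eq_norm]
    calc ‖γ t - γ t₀‖ ≤ L * |t - t₀| := hγup t (hsub ht) t₀ ht₀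
      _ ≤ L * (r / L) := by gcongr
      _ = r := by field_simp
  rw [Measure.map_apply hγmeas measurableSet_closedBall]
  refine le_trans ?_ (measure_mono hball)
  rw [withDensity_apply _ measurableSet_Icc, Measure.restrict_restrict measurableSet_Icc,
    inter_eq_left.2 hsub]
  calc ENNReal.ofReal a₀ * ENNReal.ofReal (r / L)
      = ∫⁻ _ in Icc u (u + r / L), ENNReal.ofReal a₀ := by
        rw [setLIntegral_const, Real.volume_Icc, add_sub_cancel_left]
    _ ≤ _ := setLIntegral_mono' measurableSet_Icc fun t ht =>
        ENNReal.ofReal_le_ofReal (hflow t (hsub ht))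

/-- Lower bound for the expected kernel density estimator: only the sample `X i` is kept, and only on
the event that it falls within `h / 2` of `x`, where the kernel is at least `K (1/2)`. -/
lemma const_mul_measure_le_lintegral_kde {E Ω : Type*} [NormedAddCommGroup E] [MeasurableSpace E]
    [OpensMeasurableSpace E] [MeasurableSpace Ω] (P : Measure Ω) {K : ℝ → ℝ} (hK0 : ∀ t, 0 ≤ K t)
    (hKmono : ∀ s ∈ Icc (0:ℝ) 1, ∀ t ∈ Icc (0:ℝ) 1, s ≤ t → K t ≤ K s)
    {n : ℕ} (X : Fin n → Ω → E) (hXmeas : ∀ i, Measurable (X i)) (i : Fin n) (x : E)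
    {h : ℝ} (hh : 0 < h) :
    ENNReal.ofReal (1 / (n * h ^ 2) * K (1 / 2)) * Measure.map (X i) P (closedBall x (h / 2)) ≤
      ∫⁻ ω, ENNReal.ofReal ((1 / (n * h ^ 2)) * ∑ i : Fin n, K (‖x - X i ω‖ / h)) ∂P := by
  have hm : MeasurableSet (X i ⁻¹' closedBall x (h / 2)) := hXmeas i measurableSet_closedBall
  rw [Measure.map_apply (hXmeas i) measurableSet_closedBall, ← setLIntegral_const]
  refine le_trans (setLIntegral_mono' hm fun ω hω => ?_) (setLIntegral_le_lintegral _ _)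
  have hle : ‖x - X i ω‖ / h ≤ 1 / 2 := by
    rw [mem_preimage, mem_closedBall, dist_comm, dist_eq_norm] at hω
    rw [div_le_iff₀ hh]
    linarith
  apply ENNReal.ofReal_le_ofReal
  gcongr
  calc K (1 / 2) ≤ K (‖x - X i ω‖ / h) :=
        hKmono _ ⟨by positivity, by linarith⟩ _ (by norm_num) hle
    _ ≤ ∑ i : Fin n, K (‖x - X i ω‖ / h) :=
        Finset.single_le_sum (f := fun i => K (‖x - X i ω‖ / h))
          (fun _ _ => hK0 _) (Finset.mem_univ i)

/-- for identically distributed samples `X₁, …, Xₙ` with law `μ` and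
the KDE `p̂_h(x) = (1/(n·h²))·Σᵢ K(‖x − Xᵢ‖/h)`, the expectation `E[p̂_h(x)]`
diverges as `h → 0⁺` at every `x ∈ A ∪ R`. -/
theorem kde_expectation_diverges_on_anchors_and_roads
    (a₀ A₀ c L π₀ π₁ π₂ : ℝ)
    (ha₀ : 0 < a₀) (ha₀A₀ : a₀ ≤ A₀) (hc : 0 < c) (hcL : c ≤ L)
    (hπ₀ : 0 < π₀) (hπ₁ : 0 < π₁) (hπ₂ : 0 < π₂) (hπsum : π₀ + π₁ + π₂ = 1)
    (A : Set (EuclideanSpace ℝ (Fin 2))) (hAfin : A.Finite) (hAne : A.Nonempty)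
    (μ₀ : Measure (EuclideanSpace ℝ (Fin 2))) [IsProbabilityMeasure μ₀]
    (hμ₀supp : μ₀ Aᶜ = 0)
    (hμ₀atom : ∀ a ∈ A, ENNReal.ofReal a₀ ≤ μ₀ {a})
    (k : ℕ) (γ : Fin k → ℝ → EuclideanSpace ℝ (Fin 2))
    (hγmeas : ∀ j, Measurable (γ j))
    (hγlow : ∀ j, ∀ s ∈ Icc (0:ℝ) 1, ∀ t ∈ Icc (0:ℝ) 1, c * |s - t| ≤ ‖γ j s - γ j t‖)
    (hγup : ∀ j, ∀ s ∈ Icc (0:ℝ) 1, ∀ t ∈ Icc (0:ℝ) 1, ‖γ j s - γ j t‖ ≤ L * |s - t|)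
    (R : Set (EuclideanSpace ℝ (Fin 2))) (hR : R = ⋃ j, γ j '' Icc (0:ℝ) 1)
    (hAR : A ⊆ R)
    (f : Fin k → ℝ → ℝ) (hfmeas : ∀ j, Measurable (f j))
    (hflow : ∀ j, ∀ t ∈ Icc (0:ℝ) 1, a₀ ≤ f j t)
    (hfup : ∀ j, ∀ t ∈ Icc (0:ℝ) 1, f j t ≤ A₀)
    (μ₁ : Measure (EuclideanSpace ℝ (Fin 2))) [IsProbabilityMeasure μ₁]
    (hμ₁ : μ₁ = ∑ j : Fin k, Measure.map (γ j)
      ((volume.restrict (Icc (0:ℝ) 1)).withDensity fun t => ENNReal.ofReal (f j t)))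
    (p₂ : EuclideanSpace ℝ (Fin 2) → ℝ) (hp₂meas : Measurable p₂)
    (hp₂low : ∀ x, 0 ≤ p₂ x) (hp₂up : ∀ x, p₂ x ≤ A₀)
    (μ₂ : Measure (EuclideanSpace ℝ (Fin 2))) [IsProbabilityMeasure μ₂]
    (hμ₂ : μ₂ = volume.withDensity fun x => ENNReal.ofReal (p₂ x))
    (μ : Measure (EuclideanSpace ℝ (Fin 2)))
    (hμ : μ = ENNReal.ofReal π₀ • μ₀ + ENNReal.ofReal π₁ • μ₁ + ENNReal.ofReal π₂ • μ₂)
    (K : ℝ → ℝ) (hK0 : ∀ t, 0 ≤ K t)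
    (hKmono : ∀ s ∈ Icc (0:ℝ) 1, ∀ t ∈ Icc (0:ℝ) 1, s ≤ t → K t ≤ K s)
    (hK1 : ∀ t : ℝ, 1 < t → K t = 0) (hKhalf : 0 < K (1/2))
    {Ω : Type*} [MeasurableSpace Ω] (P : Measure Ω) [IsProbabilityMeasure P]
    (n : ℕ) (hn : 0 < n)
    (X : Fin n → Ω → EuclideanSpace ℝ (Fin 2))
    (hXmeas : ∀ i, Measurable (X i))
    (hXlaw : ∀ i, Measure.map (X i) P = μ)
    (x : EuclideanSpace ℝ (Fin 2)) (hx : x ∈ A ∪ R) :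
    Tendsto (fun h : ℝ =>
        ∫⁻ ω, ENNReal.ofReal ((1 / (n * h ^ 2)) * ∑ i : Fin n, K (‖x - X i ω‖ / h)) ∂P)
      (𝓝[>] (0:ℝ)) (𝓝 ⊤) := by
  have hL : 0 < L := hc.trans_le hcL
  have hxR : x ∈ R := hx.elim (fun h => hAR h) id
  rw [hR, mem_iUnion] at hxR
  obtain ⟨j, t₀, ht₀, rfl⟩ := hxR
  have hn' : (0:ℝ) < n := by exact_mod_cast hn
  have hmass : ∀ h : ℝ, 0 < h → h ≤ L →
      ENNReal.ofReal (π₁ * (a₀ * (h / 2 / L))) ≤ μ (closedBall (γ j t₀) (h / 2)) := by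
    intro h hh hhL
    have hroad := road_mass_closedBall hL (hγmeas j) (hγup j) (hflow j) ht₀
      (half_pos hh) (by linarith)
    have hj : ENNReal.ofReal a₀ * ENNReal.ofReal (h / 2 / L)
        ≤ μ₁ (closedBall (γ j t₀) (h / 2)) := by
      rw [hμ₁, Measure.finsetSum_apply]
      exact hroad.trans (Finset.single_le_sum
        (f := fun j => Measure.map (γ j) ((volume.restrict (Icc (0:ℝ) 1)).withDensity
          fun t => ENNReal.ofReal (f j t)) (closedBall _ (h / 2)))
        (fun _ _ => zero_le) (Finset.mem_univ j))
    rw [hμ, ENNReal.ofReal_mul hπ₁.le, ENNReal.ofReal_mul ha₀.le]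
    simp only [Measure.add_apply, Measure.smul_apply, smul_eq_mul]
    calc _ ≤ ENNReal.ofReal π₁ * μ₁ (closedBall (γ j t₀) (h / 2)) := by gcongr
      _ ≤ _ := le_add_right le_add_self
  set C : ℝ := K (1 / 2) * π₁ * a₀ / (2 * L * n) with hC
  have hCpos : 0 < C := by positivity
  have hlim : Tendsto (fun h : ℝ => ENNReal.ofReal (C * h⁻¹)) (𝓝[>] (0:ℝ)) (𝓝 ⊤) :=
    ENNReal.tendsto_ofReal_nhds_top.2 (tendsto_inv_nhdsGT_zero.const_mul_atTop hCpos)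
  refine tendsto_nhds_top_mono hlim ?_
  filter_upwards [Ioc_mem_nhdsGT hL] with h hh
  have hh0 : 0 < h := hh.1
  refine le_trans ?_ (const_mul_measure_le_lintegral_kde P hK0 hKmono X hXmeas ⟨0, hn⟩ _ hh0)
  rw [hXlaw]
  calc ENNReal.ofReal (C * h⁻¹)
      = ENNReal.ofReal (1 / (n * h ^ 2) * K (1 / 2))
          * ENNReal.ofReal (π₁ * (a₀ * (h / 2 / L))) := by
        rw [← ENNReal.ofReal_mul (by positivity)]
        congr 1
        rw [hC]
        field_simp
    _ ≤ _ := by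
        gcongr
        exact hmass h hh0 hh.2
end

section
/- There exists a constant C > 0 such that for every h ∈ (0, 1], π₀ ≤ μ(A ⊕ h) ≤ π₀ + C·h, where A ⊕ h = {y ∈ ℝ² : dist(y, A) ≤ h} is the h-dilation of the anchor set A. In particular μ(A ⊕ h) → π₀ as h → 0⁺. -/
/-!
Since `A` is finite, `A ⊕ h` is the union of the closed balls of radius `h` centred at the points
of `A`. It contains `A`, which carries all of `μ₀`, so the atomic part contributes exactly `π₀`.
The other two parts give each ball mass `O(h)`: the lower bi-Lipschitz bound on a curve `γ` makes
the set of parameters that `γ` sends into a ball of radius `h` have diameter at most `2h/c`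
(`curve_closedBall_le`), and the planar part of a ball is at most `A₀ π h² ≤ A₀ π h`
(`density_closedBall_le`). Summing over the points of `A` yields the constant
`C = |A| (π₁ k A₀ (2/c) + π₂ A₀ π)`, and the limit follows by squeezing.
-/

open MeasureTheory Filter Metric Set Topology

/-- A measure with density at most `A₀` along a curve satisfying the lower Lipschitz bound gives
a ball of radius `h` mass at most `A₀ * (2 / c) * h`: two parameters whose images lie in the ball
are at distance at most `2h/c`. -/
lemma curve_closedBall_le {E : Type*} [NormedAddCommGroup E] [MeasurableSpace E] [BorelSpace E]
    {A₀ c : ℝ} (hA₀ : 0 ≤ A₀) (hc : 0 < c) {γ : ℝ → E} (hγ : Measurable γ)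
    (hlow : ∀ s ∈ Icc (0:ℝ) 1, ∀ t ∈ Icc (0:ℝ) 1, c * |s - t| ≤ ‖γ s - γ t‖)
    {f : ℝ → ℝ} (hfup : ∀ t ∈ Icc (0:ℝ) 1, f t ≤ A₀) (a : E) (h : ℝ) :
    Measure.map γ ((volume.restrict (Icc (0:ℝ) 1)).withDensity fun t => ENNReal.ofReal (f t))
      (closedBall a h) ≤ ENNReal.ofReal (A₀ * (2 / c) * h) := by
  have hm : MeasurableSet (γ ⁻¹' closedBall a h) := hγ measurableSet_closedBall
  rw [Measure.map_apply hγ measurableSet_closedBall, withDensity_apply _ hm,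
    Measure.restrict_restrict hm]
  have hdiam : volume (γ ⁻¹' closedBall a h ∩ Icc (0:ℝ) 1) ≤ ENNReal.ofReal (2 / c * h) := by
    refine (Real.volume_le_diam _).trans (ediam_le fun s hs t ht => ?_)
    rw [edist_dist, Real.dist_eq]
    apply ENNReal.ofReal_le_ofReal
    have h1 := hlow s hs.2 t ht.2
    have h2 : ‖γ s - γ t‖ ≤ h + h := by
      rw [← dist_eq_norm]
      exact (dist_triangle_right _ _ a).trans (add_le_add hs.1 ht.1)
    rw [div_mul_eq_mul_div, le_div_iff₀ hc]
    linarith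
  calc ∫⁻ t in γ ⁻¹' closedBall a h ∩ Icc (0:ℝ) 1, ENNReal.ofReal (f t)
      ≤ ∫⁻ _ in γ ⁻¹' closedBall a h ∩ Icc (0:ℝ) 1, ENNReal.ofReal A₀ :=
        setLIntegral_mono measurable_const fun t ht => ENNReal.ofReal_le_ofReal (hfup t ht.2)
    _ = ENNReal.ofReal A₀ * volume (γ ⁻¹' closedBall a h ∩ Icc (0:ℝ) 1) := setLIntegral_const _ _
    _ ≤ ENNReal.ofReal A₀ * ENNReal.ofReal (2 / c * h) := by gcongr
    _ = ENNReal.ofReal (A₀ * (2 / c) * h) := by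
        rw [← ENNReal.ofReal_mul hA₀, mul_assoc]

lemma density_closedBall_le {A₀ : ℝ} (hA₀ : 0 ≤ A₀) {p : EuclideanSpace ℝ (Fin 2) → ℝ}
    (hp : ∀ x, p x ≤ A₀) (a : EuclideanSpace ℝ (Fin 2)) {h : ℝ} (h0 : 0 < h) (h1 : h ≤ 1) :
    (volume.withDensity fun x => ENNReal.ofReal (p x)) (closedBall a h)
      ≤ ENNReal.ofReal (A₀ * Real.pi * h) := by
  rw [withDensity_apply _ measurableSet_closedBall]
  calc ∫⁻ x in closedBall a h, ENNReal.ofReal (p x)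
      ≤ ∫⁻ _ in closedBall a h, ENNReal.ofReal A₀ :=
        setLIntegral_mono measurable_const fun x _ => ENNReal.ofReal_le_ofReal (hp x)
    _ = ENNReal.ofReal A₀ * volume (closedBall a h) := setLIntegral_const _ _
    _ = ENNReal.ofReal (A₀ * (h ^ 2 * Real.pi)) := by
        rw [EuclideanSpace.volume_closedBall_fin_two, ENNReal.ofReal_mul hA₀,
          ENNReal.ofReal_mul (by positivity), ENNReal.ofReal_pow h0.le,
          ← NNReal.coe_real_pi, ENNReal.ofReal_coe_nnreal]
    _ ≤ ENNReal.ofReal (A₀ * Real.pi * h) := by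
        apply ENNReal.ofReal_le_ofReal
        have : h ^ 2 ≤ h := by nlinarith
        calc A₀ * (h ^ 2 * Real.pi) ≤ A₀ * (h * Real.pi) := by gcongr
          _ = A₀ * Real.pi * h := by ring

/-- there is `C > 0` with `π₀ ≤ μ(A ⊕ h) ≤ π₀ + C·h` for all
`h ∈ (0,1]`; in particular `μ(A ⊕ h) → π₀` as `h → 0⁺`. -/
theorem measure_dilation_of_anchor_set
    (a₀ A₀ c L π₀ π₁ π₂ : ℝ)
    (ha₀ : 0 < a₀) (ha₀A₀ : a₀ ≤ A₀) (hc : 0 < c) (hcL : c ≤ L)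
    (hπ₀ : 0 < π₀) (hπ₁ : 0 < π₁) (hπ₂ : 0 < π₂) (hπsum : π₀ + π₁ + π₂ = 1)
    (A : Set (EuclideanSpace ℝ (Fin 2))) (hAfin : A.Finite) (hAne : A.Nonempty)
    (μ₀ : Measure (EuclideanSpace ℝ (Fin 2))) [IsProbabilityMeasure μ₀]
    (hμ₀supp : μ₀ Aᶜ = 0)
    (hμ₀atom : ∀ a ∈ A, ENNReal.ofReal a₀ ≤ μ₀ {a})
    (k : ℕ) (γ : Fin k → ℝ → EuclideanSpace ℝ (Fin 2))
    (hγmeas : ∀ j, Measurable (γ j))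
    (hγlow : ∀ j, ∀ s ∈ Icc (0:ℝ) 1, ∀ t ∈ Icc (0:ℝ) 1, c * |s - t| ≤ ‖γ j s - γ j t‖)
    (hγup : ∀ j, ∀ s ∈ Icc (0:ℝ) 1, ∀ t ∈ Icc (0:ℝ) 1, ‖γ j s - γ j t‖ ≤ L * |s - t|)
    (R : Set (EuclideanSpace ℝ (Fin 2))) (hR : R = ⋃ j, γ j '' Icc (0:ℝ) 1)
    (hAR : A ⊆ R)
    (f : Fin k → ℝ → ℝ) (hfmeas : ∀ j, Measurable (f j))
    (hflow : ∀ j, ∀ t ∈ Icc (0:ℝ) 1, a₀ ≤ f j t)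
    (hfup : ∀ j, ∀ t ∈ Icc (0:ℝ) 1, f j t ≤ A₀)
    (μ₁ : Measure (EuclideanSpace ℝ (Fin 2))) [IsProbabilityMeasure μ₁]
    (hμ₁ : μ₁ = ∑ j : Fin k, Measure.map (γ j)
      ((volume.restrict (Icc (0:ℝ) 1)).withDensity fun t => ENNReal.ofReal (f j t)))
    (p₂ : EuclideanSpace ℝ (Fin 2) → ℝ) (hp₂meas : Measurable p₂)
    (hp₂low : ∀ x, 0 ≤ p₂ x) (hp₂up : ∀ x, p₂ x ≤ A₀)
    (μ₂ : Measure (EuclideanSpace ℝ (Fin 2))) [IsProbabilityMeasure μ₂]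
    (hμ₂ : μ₂ = volume.withDensity fun x => ENNReal.ofReal (p₂ x))
    (μ : Measure (EuclideanSpace ℝ (Fin 2)))
    (hμ : μ = ENNReal.ofReal π₀ • μ₀ + ENNReal.ofReal π₁ • μ₁ + ENNReal.ofReal π₂ • μ₂)
    :
    (∃ C : ℝ, 0 < C ∧ ∀ h : ℝ, 0 < h → h ≤ 1 →
      ENNReal.ofReal π₀ ≤ μ {y | infDist y A ≤ h} ∧
      μ {y | infDist y A ≤ h} ≤ ENNReal.ofReal (π₀ + C * h)) ∧
    Tendsto (fun h : ℝ => μ {y | infDist y A ≤ h}) (𝓝[>] (0:ℝ))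
      (𝓝 (ENNReal.ofReal π₀)) := by
  have hA₀ : 0 < A₀ := ha₀.trans_le ha₀A₀
  have hbounds : ∃ C : ℝ, 0 < C ∧ ∀ h : ℝ, 0 < h → h ≤ 1 →
      ENNReal.ofReal π₀ ≤ μ {y | infDist y A ≤ h} ∧
      μ {y | infDist y A ≤ h} ≤ ENNReal.ofReal (π₀ + C * h) := by
    set D : ℝ := π₁ * (k * (A₀ * (2 / c))) + π₂ * (A₀ * Real.pi) with hD
    have hDpos : 0 < D := by
      have := Real.pi_pos
      positivity
    have hcard : 0 < (hAfin.toFinset.card : ℝ) := by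
      simpa [Finset.card_pos] using hAne
    refine ⟨hAfin.toFinset.card * D, by positivity, fun h h0 h1 => ?_⟩
    set S : Set (EuclideanSpace ℝ (Fin 2)) := {y | infDist y A ≤ h} with hS
    have hAS : A ⊆ S := fun a ha => by
      simpa [hS, infDist_zero_of_mem ha] using h0.le
    have hSball : S ⊆ ⋃ a ∈ hAfin.toFinset, closedBall a h := fun y hy => by
      obtain ⟨a, ha, hya⟩ := hAfin.isCompact.exists_infDist_eq_dist hAne y
      simp only [mem_iUnion]
      exact ⟨a, hAfin.mem_toFinset.2 ha, mem_closedBall.2 (hya ▸ hy)⟩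
    have hμ₀S : μ₀ S = 1 := by
      have hSm : MeasurableSet S := measurable_infDist measurableSet_Iic
      rw [← prob_compl_eq_zero_iff hSm]
      exact measure_mono_null (compl_subset_compl.2 hAS) hμ₀supp
    have hμS : μ S = ENNReal.ofReal π₀
        + (ENNReal.ofReal π₁ • μ₁ + ENNReal.ofReal π₂ • μ₂) S := by
      rw [hμ, add_assoc, Measure.add_apply, Measure.smul_apply, hμ₀S, smul_eq_mul, mul_one]
    have hball : ∀ a, (ENNReal.ofReal π₁ • μ₁ + ENNReal.ofReal π₂ • μ₂) (closedBall a h)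
        ≤ ENNReal.ofReal (D * h) := fun a => by
      have e1 : μ₁ (closedBall a h) ≤ ENNReal.ofReal (k * (A₀ * (2 / c) * h)) := by
        rw [hμ₁, Measure.finsetSum_apply]
        refine (Finset.sum_le_sum fun j _ =>
          curve_closedBall_le hA₀.le hc (hγmeas j) (hγlow j) (hfup j) a h).trans_eq ?_
        rw [Finset.sum_const, Finset.card_univ, Fintype.card_fin, nsmul_eq_mul,
          ENNReal.ofReal_mul k.cast_nonneg, ENNReal.ofReal_natCast]
      have e2 : μ₂ (closedBall a h) ≤ ENNReal.ofReal (A₀ * Real.pi * h) := by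
        rw [hμ₂]
        exact density_closedBall_le hA₀.le hp₂up a h0 h1
      have := Real.pi_pos
      calc (ENNReal.ofReal π₁ • μ₁ + ENNReal.ofReal π₂ • μ₂) (closedBall a h)
          = ENNReal.ofReal π₁ * μ₁ (closedBall a h)
            + ENNReal.ofReal π₂ * μ₂ (closedBall a h) := rfl
        _ ≤ ENNReal.ofReal π₁ * ENNReal.ofReal (k * (A₀ * (2 / c) * h))
            + ENNReal.ofReal π₂ * ENNReal.ofReal (A₀ * Real.pi * h) := by gcongr
        _ = ENNReal.ofReal (D * h) := by
          rw [← ENNReal.ofReal_mul hπ₁.le, ← ENNReal.ofReal_mul hπ₂.le,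
            ← ENNReal.ofReal_add (by positivity) (by positivity), hD]
          congr 1
          ring
    rw [hμS]
    refine ⟨le_self_add, ?_⟩
    rw [ENNReal.ofReal_add hπ₀.le (by positivity)]
    gcongr
    calc (ENNReal.ofReal π₁ • μ₁ + ENNReal.ofReal π₂ • μ₂) S
        ≤ ∑ a ∈ hAfin.toFinset,
            (ENNReal.ofReal π₁ • μ₁ + ENNReal.ofReal π₂ • μ₂) (closedBall a h) :=
          (measure_mono hSball).trans (measure_biUnion_finset_le _ _)
      _ ≤ ∑ _a ∈ hAfin.toFinset, ENNReal.ofReal (D * h) :=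
          Finset.sum_le_sum fun a _ => hball a
      _ = ENNReal.ofReal (hAfin.toFinset.card * D * h) := by
          rw [Finset.sum_const, nsmul_eq_mul, mul_assoc, ENNReal.ofReal_mul (Nat.cast_nonneg _),
            ENNReal.ofReal_natCast]
  refine ⟨hbounds, ?_⟩
  obtain ⟨C, -, hC⟩ := hbounds
  have hIoc : ∀ᶠ h : ℝ in 𝓝[>] (0:ℝ), h ∈ Ioc (0:ℝ) 1 := Ioc_mem_nhdsGT one_pos
  have hlim : Tendsto (fun h : ℝ => ENNReal.ofReal (π₀ + C * h)) (𝓝[>] (0:ℝ))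
      (𝓝 (ENNReal.ofReal π₀)) := by
    have : Continuous fun h : ℝ => ENNReal.ofReal (π₀ + C * h) :=
      ENNReal.continuous_ofReal.comp (by fun_prop)
    simpa using (this.tendsto 0).mono_left nhdsWithin_le_nhds
  exact tendsto_of_tendsto_of_tendsto_of_le_of_le' tendsto_const_nhds hlim
    (hIoc.mono fun h hh => (hC h hh.1 hh.2).1) (hIoc.mono fun h hh => (hC h hh.1 hh.2).2)
end

section
/- Let L > 0 and let γ : [0,1] → ℝ² be L-Lipschitz. Then for every h ∈ (0, 1], the Lebesgue measure of the h-neighborhood of the curve satisfies vol({y ∈ ℝ² : dist(y, γ([0,1])) ≤ h}) ≤ 4π·(L + 2)·h. -/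
open MeasureTheory Filter Metric Set Topology

/-!
Put `N = ⌈L / h⌉`. Every `t ∈ [0,1]` lies within `1 / N` of the grid point `⌊t N⌋ / N`, so every
point of the curve lies within `L / N ≤ h` of one of the `N + 1` points `γ (i / N)`. The curve is
compact, so a point of its closed `h`-neighborhood is within `h` of some point of the curve, hence
within `2 h` of some `γ (i / N)`. The neighborhood is thus covered by `N + 1 ≤ L / h + 2` discs of
area `4 π h²`, of total area at most `4 π (L + 2 h) h ≤ 4 π (L + 2) h`.
-/

/-- for an `L`-Lipschitz curve `γ : [0,1] → ℝ²` and `0 < h ≤ 1`, the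
Lebesgue measure of the `h`-neighborhood of the curve is at most `4π·(L+2)·h`. -/
theorem volume_neighborhood_lipschitz_curve_le
    (L : ℝ) (hL : 0 < L)
    (γ : ℝ → EuclideanSpace ℝ (Fin 2))
    (hγ : LipschitzOnWith (Real.toNNReal L) γ (Icc 0 1)) :
    ∀ h : ℝ, 0 < h → h ≤ 1 →
      volume {y : EuclideanSpace ℝ (Fin 2) | infDist y (γ '' Icc (0:ℝ) 1) ≤ h} ≤
        ENNReal.ofReal (4 * Real.pi * (L + 2) * h) := by
  intro h hh hh1
  set N : ℕ := ⌈L / h⌉₊ with hN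
  have hN1 : L / h ≤ N := Nat.le_ceil _
  have hN2 : (N : ℝ) < L / h + 1 := Nat.ceil_lt_add_one (by positivity)
  have hN0 : (0 : ℝ) < N := lt_of_lt_of_le (by positivity) hN1
  have hcomp : IsCompact (γ '' Icc (0:ℝ) 1) := isCompact_Icc.image_of_continuousOn hγ.continuousOn
  have hne : (γ '' Icc (0:ℝ) 1).Nonempty := (nonempty_Icc.2 zero_le_one).image γ
  have hLN : L ≤ N * h := (div_le_iff₀ hh).1 hN1
  have hcover : {y : EuclideanSpace ℝ (Fin 2) | infDist y (γ '' Icc (0:ℝ) 1) ≤ h} ⊆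
      ⋃ i ∈ Finset.range (N + 1), closedBall (γ (i / N)) (2 * h) := by
    intro y hy
    obtain ⟨_, ⟨t, ht, rfl⟩, hyt⟩ := hcomp.exists_infDist_eq_dist hne y
    have hdist : dist y (γ t) ≤ h := hyt ▸ hy
    have htN : 0 ≤ t * N := mul_nonneg ht.1 hN0.le
    have hfl : (⌊t * N⌋₊ : ℝ) ≤ t * N := Nat.floor_le htN
    have hfl' : t * N < ⌊t * N⌋₊ + 1 := Nat.lt_floor_add_one _
    have hflN : (⌊t * N⌋₊ : ℝ) ≤ N := hfl.trans (mul_le_of_le_one_left hN0.le ht.2)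
    have hmem : (⌊t * N⌋₊ : ℝ) / N ∈ Icc (0:ℝ) 1 :=
      ⟨by positivity, (div_le_one hN0).2 hflN⟩
    have hgrid : dist t ((⌊t * N⌋₊ : ℝ) / N) ≤ 1 / N := by
      rw [Real.dist_eq, abs_of_nonneg (sub_nonneg.2 ((div_le_iff₀ hN0).2 hfl)), sub_le_iff_le_add,
        ← add_div, le_div_iff₀ hN0]
      linarith
    have hstep : dist (γ t) (γ ((⌊t * N⌋₊ : ℝ) / N)) ≤ h := by
      have h1 := hγ.dist_le_mul t ht _ hmem
      rw [Real.coe_toNNReal L hL.le] at h1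
      have h2 : L * (1 / N) ≤ h := by
        rw [mul_one_div, div_le_iff₀ hN0]
        linarith
      exact h1.trans ((mul_le_mul_of_nonneg_left hgrid hL.le).trans h2)
    refine mem_biUnion (x := ⌊t * N⌋₊) ?_ ?_
    · have : ⌊t * N⌋₊ ≤ N := by exact_mod_cast hflN
      simpa using Nat.lt_succ_of_le this
    · rw [mem_closedBall]
      linarith [dist_triangle y (γ t) (γ ((⌊t * N⌋₊ : ℝ) / N))]
  have harea : ∀ x : EuclideanSpace ℝ (Fin 2),
      volume (closedBall x (2 * h)) = ENNReal.ofReal ((2 * h) ^ 2 * Real.pi) := by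
    intro x
    rw [EuclideanSpace.volume_closedBall_fin_two, ENNReal.ofReal_mul (p := (2 * h) ^ 2)
      (by positivity), ENNReal.ofReal_pow (by positivity)]
  calc volume {y : EuclideanSpace ℝ (Fin 2) | infDist y (γ '' Icc (0:ℝ) 1) ≤ h}
      ≤ volume (⋃ i ∈ Finset.range (N + 1), closedBall (γ (i / N)) (2 * h)) :=
        measure_mono hcover
    _ ≤ ∑ i ∈ Finset.range (N + 1), volume (closedBall (γ (i / N)) (2 * h)) :=
        measure_biUnion_finset_le _ _
    _ = ENNReal.ofReal (((N + 1 : ℕ) : ℝ) * ((2 * h) ^ 2 * Real.pi)) := by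
        rw [ENNReal.ofReal_mul (by positivity), ENNReal.ofReal_natCast]
        simp [harea]
    _ ≤ ENNReal.ofReal (4 * Real.pi * (L + 2) * h) := by
        apply ENNReal.ofReal_le_ofReal
        have hNh : (N : ℝ) * h + h ≤ L + 2 := by
          have h1 := mul_le_mul_of_nonneg_right hN2.le hh.le
          rw [add_mul, div_mul_cancel₀ _ hh.ne'] at h1
          linarith
        have h2 := mul_le_mul_of_nonneg_left hNh (by positivity : 0 ≤ 4 * Real.pi * h)
        push_cast
        linarith
end

section
/- There exists a constant C > 0 such that for every h ∈ (0, 1], π₀ + π₁ ≤ μ((A ∪ R) ⊕ h) ≤ π₀ + π₁ + C·h, where (A ∪ R) ⊕ h = {y ∈ ℝ² : dist(y, A ∪ R) ≤ h} is the h-dilation of the union of the anchor set and the roads. In particular μ((A ∪ R) ⊕ h) → π₀ + π₁ as h → 0⁺. -/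
/-!
The anchors lie on the roads, so the dilation `S` of `A ∪ R` is a dilation of `R`, and it carries
all the mass of `μ₀` and of `μ₁`. Hence `μ S = π₀ + π₁ + π₂ * μ₂ S`, which gives the lower bound and
leaves only `μ₂ S = O(h)`. Since the density of `μ₂` is bounded by `A₀`, this is an area estimate
(`volume_dilation_le`): splitting `[0, 1]` into `⌈1 / h⌉` equal pieces, the `L`-Lipschitz road `γ j`
stays within `L * h` of the images of the division points, so `S` is covered by `O(1 / h)` discs
of radius `(2 + L) * h`, of total area `O(h)`. The limit follows by squeezing.
-/

open MeasureTheory Filter Metric Set Topology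

/-- Area of the `h`-dilation of finitely many Lipschitz curves, by a covering with `k * (⌈1/h⌉ + 1)`
discs of radius `(2 + L) * h`. -/
lemma volume_dilation_le {L : ℝ} (hL : 0 ≤ L) {k : ℕ} {γ : Fin k → ℝ → EuclideanSpace ℝ (Fin 2)}
    (hγup : ∀ j, ∀ s ∈ Icc (0:ℝ) 1, ∀ t ∈ Icc (0:ℝ) 1, ‖γ j s - γ j t‖ ≤ L * |s - t|)
    (hne : (⋃ j, γ j '' Icc (0:ℝ) 1).Nonempty) {h : ℝ} (h0 : 0 < h) (h1 : h ≤ 1) :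
    volume {y | infDist y (⋃ j, γ j '' Icc (0:ℝ) 1) ≤ h} ≤
      ENNReal.ofReal (k * (3 * (Real.pi * (2 + L) ^ 2)) * h) := by
  set n : ℕ := ⌈1 / h⌉₊ with hn
  have hnlow : 1 / h ≤ n := Nat.le_ceil _
  have hnup : (n : ℝ) < 1 / h + 1 := Nat.ceil_lt_add_one (by positivity)
  have hnpos : (0 : ℝ) < n := lt_of_lt_of_le (by positivity) hnlow
  have hcover : {y | infDist y (⋃ j, γ j '' Icc (0:ℝ) 1) ≤ h} ⊆
      ⋃ j : Fin k, ⋃ i ∈ Finset.range (n + 1), closedBall (γ j (i / n)) ((2 + L) * h) := by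
    intro y hy
    -- The slack from `h` to `2 * h` provides a nearby road point without an appeal to compactness.
    have hy2 : infDist y (⋃ j, γ j '' Icc (0:ℝ) 1) < 2 * h := by
      have hy' : infDist y (⋃ j, γ j '' Icc (0:ℝ) 1) ≤ h := hy
      linarith
    obtain ⟨x, hx, hyx⟩ := (infDist_lt_iff hne).1 hy2
    obtain ⟨j, t, ht, rfl⟩ := mem_iUnion.1 hx
    have htn : 0 ≤ t * n := mul_nonneg ht.1 hnpos.le
    have hfl : (⌊t * n⌋₊ : ℝ) ≤ t * n := Nat.floor_le htn
    have hfl2 : t * n < ⌊t * n⌋₊ + 1 := Nat.lt_floor_add_one _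
    have hle : t * n ≤ n := by nlinarith [ht.2]
    have hin : ⌊t * n⌋₊ ≤ n := Nat.floor_le_of_le hle
    have hmem : ((⌊t * n⌋₊ : ℝ) / n) ∈ Icc (0:ℝ) 1 :=
      ⟨by positivity, by rw [div_le_one hnpos]; exact_mod_cast hin⟩
    have hclose : |t - (⌊t * n⌋₊ : ℝ) / n| ≤ h := by
      have hnh : 1 ≤ h * n := by
        rw [div_le_iff₀ h0] at hnlow; linarith
      have hlow : (⌊t * n⌋₊ : ℝ) / n ≤ t := by rw [div_le_iff₀ hnpos]; exact hfl
      have hup : t - h ≤ (⌊t * n⌋₊ : ℝ) / n := by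
        rw [le_div_iff₀ hnpos]; nlinarith
      rw [abs_le]; constructor <;> linarith
    have hstep := hγup j t ht _ hmem
    simp only [mem_iUnion]
    refine ⟨j, ⌊t * n⌋₊, Finset.mem_range.2 (by omega), ?_⟩
    rw [mem_closedBall]
    have htri := dist_triangle y (γ j t) (γ j ((⌊t * n⌋₊ : ℝ) / n))
    rw [dist_eq_norm (γ j t)] at htri
    have hLh := mul_le_mul_of_nonneg_left hclose hL
    linarith
  have hball : ∀ x : EuclideanSpace ℝ (Fin 2), volume (closedBall x ((2 + L) * h)) =
      ENNReal.ofReal (Real.pi * ((2 + L) * h) ^ 2) := by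
    intro x
    rw [EuclideanSpace.volume_closedBall_fin_two, ← NNReal.coe_real_pi,
      ← ENNReal.ofReal_pow (by positivity), ENNReal.ofReal_mul (by positivity),
      ENNReal.ofReal_coe_nnreal, mul_comm]
  calc volume {y | infDist y (⋃ j, γ j '' Icc (0:ℝ) 1) ≤ h}
      ≤ volume (⋃ j : Fin k, ⋃ i ∈ Finset.range (n + 1),
          closedBall (γ j (i / n)) ((2 + L) * h)) := measure_mono hcover
    _ ≤ ∑ j : Fin k, ∑ i ∈ Finset.range (n + 1),
          volume (closedBall (γ j (i / n)) ((2 + L) * h)) :=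
        (measure_iUnion_fintype_le _ _).trans
          (Finset.sum_le_sum fun j _ => measure_biUnion_finset_le _ _)
    _ = ENNReal.ofReal (k * ((n + 1) * (Real.pi * ((2 + L) * h) ^ 2))) := by
        simp only [hball, Finset.sum_const, Finset.card_range, Finset.card_univ, Fintype.card_fin,
          nsmul_eq_mul]
        rw [ENNReal.ofReal_mul (p := (k : ℝ)) (by positivity),
          ENNReal.ofReal_mul (p := (n : ℝ) + 1) (by positivity), ENNReal.ofReal_natCast,
          show ((n : ℝ) + 1) = ((n + 1 : ℕ) : ℝ) by push_cast; rfl, ENNReal.ofReal_natCast]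
    _ ≤ ENNReal.ofReal (k * (3 * (Real.pi * (2 + L) ^ 2)) * h) := by
        apply ENNReal.ofReal_le_ofReal
        have hcount : ((n : ℝ) + 1) * h ≤ 3 := by
          have : (1 / h) * h = 1 := by field_simp
          nlinarith
        calc (k : ℝ) * ((n + 1) * (Real.pi * ((2 + L) * h) ^ 2))
            = (k * (Real.pi * (2 + L) ^ 2) * h) * ((n + 1) * h) := by ring
          _ ≤ (k * (Real.pi * (2 + L) ^ 2) * h) * 3 := by gcongr
          _ = _ := by ring

/-- A sum of curve measures gives full mass to every measurable set containing the curves. -/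
lemma curve_measure_compl_eq_zero {k : ℕ} {γ : Fin k → ℝ → EuclideanSpace ℝ (Fin 2)}
    (hγmeas : ∀ j, Measurable (γ j)) (f : Fin k → ℝ → ℝ)
    {S : Set (EuclideanSpace ℝ (Fin 2))} (hS : MeasurableSet S)
    (hsub : (⋃ j, γ j '' Icc (0:ℝ) 1) ⊆ S) :
    (∑ j : Fin k, Measure.map (γ j)
      ((volume.restrict (Icc (0:ℝ) 1)).withDensity fun t => ENNReal.ofReal (f j t))) Sᶜ = 0 := by
  rw [Measure.finsetSum_apply]
  refine Finset.sum_eq_zero fun j _ => ?_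
  rw [Measure.map_apply (hγmeas j) hS.compl]
  apply withDensity_absolutelyContinuous
  rw [Measure.restrict_apply (hγmeas j hS.compl)]
  convert measure_empty (μ := volume)
  ext t
  simp only [mem_inter_iff, mem_preimage, mem_compl_iff, mem_empty_iff_false, iff_false, not_and]
  exact fun hnot ht => hnot (hsub (mem_iUnion.2 ⟨j, t, ht, rfl⟩))

/-- there is `C > 0` with
`π₀ + π₁ ≤ μ((A ∪ R) ⊕ h) ≤ π₀ + π₁ + C·h` for all `h ∈ (0,1]`; in particular
`μ((A ∪ R) ⊕ h) → π₀ + π₁` as `h → 0⁺`. -/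
theorem measure_dilation_of_anchor_and_road_set
    (a₀ A₀ c L π₀ π₁ π₂ : ℝ)
    (ha₀ : 0 < a₀) (ha₀A₀ : a₀ ≤ A₀) (hc : 0 < c) (hcL : c ≤ L)
    (hπ₀ : 0 < π₀) (hπ₁ : 0 < π₁) (hπ₂ : 0 < π₂) (hπsum : π₀ + π₁ + π₂ = 1)
    (A : Set (EuclideanSpace ℝ (Fin 2))) (hAfin : A.Finite) (hAne : A.Nonempty)
    (μ₀ : Measure (EuclideanSpace ℝ (Fin 2))) [IsProbabilityMeasure μ₀]
    (hμ₀supp : μ₀ Aᶜ = 0)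
    (hμ₀atom : ∀ a ∈ A, ENNReal.ofReal a₀ ≤ μ₀ {a})
    (k : ℕ) (γ : Fin k → ℝ → EuclideanSpace ℝ (Fin 2))
    (hγmeas : ∀ j, Measurable (γ j))
    (hγlow : ∀ j, ∀ s ∈ Icc (0:ℝ) 1, ∀ t ∈ Icc (0:ℝ) 1, c * |s - t| ≤ ‖γ j s - γ j t‖)
    (hγup : ∀ j, ∀ s ∈ Icc (0:ℝ) 1, ∀ t ∈ Icc (0:ℝ) 1, ‖γ j s - γ j t‖ ≤ L * |s - t|)
    (R : Set (EuclideanSpace ℝ (Fin 2))) (hR : R = ⋃ j, γ j '' Icc (0:ℝ) 1)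
    (hAR : A ⊆ R)
    (f : Fin k → ℝ → ℝ) (hfmeas : ∀ j, Measurable (f j))
    (hflow : ∀ j, ∀ t ∈ Icc (0:ℝ) 1, a₀ ≤ f j t)
    (hfup : ∀ j, ∀ t ∈ Icc (0:ℝ) 1, f j t ≤ A₀)
    (μ₁ : Measure (EuclideanSpace ℝ (Fin 2))) [IsProbabilityMeasure μ₁]
    (hμ₁ : μ₁ = ∑ j : Fin k, Measure.map (γ j)
      ((volume.restrict (Icc (0:ℝ) 1)).withDensity fun t => ENNReal.ofReal (f j t)))
    (p₂ : EuclideanSpace ℝ (Fin 2) → ℝ) (hp₂meas : Measurable p₂)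
    (hp₂low : ∀ x, 0 ≤ p₂ x) (hp₂up : ∀ x, p₂ x ≤ A₀)
    (μ₂ : Measure (EuclideanSpace ℝ (Fin 2))) [IsProbabilityMeasure μ₂]
    (hμ₂ : μ₂ = volume.withDensity fun x => ENNReal.ofReal (p₂ x))
    (μ : Measure (EuclideanSpace ℝ (Fin 2)))
    (hμ : μ = ENNReal.ofReal π₀ • μ₀ + ENNReal.ofReal π₁ • μ₁ + ENNReal.ofReal π₂ • μ₂)
    :
    (∃ C : ℝ, 0 < C ∧ ∀ h : ℝ, 0 < h → h ≤ 1 →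
      ENNReal.ofReal (π₀ + π₁) ≤ μ {y | infDist y (A ∪ R) ≤ h} ∧
      μ {y | infDist y (A ∪ R) ≤ h} ≤ ENNReal.ofReal (π₀ + π₁ + C * h)) ∧
    Tendsto (fun h : ℝ => μ {y | infDist y (A ∪ R) ≤ h}) (𝓝[>] (0:ℝ))
      (𝓝 (ENNReal.ofReal (π₀ + π₁))) := by
  have hL : 0 ≤ L := hc.le.trans hcL
  have hA₀ : 0 ≤ A₀ := ha₀.le.trans ha₀A₀
  rw [union_eq_self_of_subset_left hAR]
  have hRne : R.Nonempty := hAne.mono hAR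
  have hmeas : ∀ h : ℝ, MeasurableSet {y | infDist y R ≤ h} := fun h =>
    measurableSet_le measurable_infDist measurable_const
  have hRsub : ∀ h : ℝ, 0 < h → R ⊆ {y | infDist y R ≤ h} := fun h h0 y hy => by
    simp only [mem_ofPred_eq, infDist_zero_of_mem hy, h0.le]
  have hmass₀ : ∀ h : ℝ, 0 < h → μ₀ {y | infDist y R ≤ h} = 1 := fun h h0 => by
    rw [← prob_compl_eq_zero_iff (hmeas h)]
    exact measure_mono_null (compl_subset_compl.2 (hAR.trans (hRsub h h0))) hμ₀supp
  have hmass₁ : ∀ h : ℝ, 0 < h → μ₁ {y | infDist y R ≤ h} = 1 := fun h h0 => by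
    rw [← prob_compl_eq_zero_iff (hmeas h), hμ₁]
    exact curve_measure_compl_eq_zero hγmeas f (hmeas h) (hR ▸ hRsub h h0)
  have hmass : ∀ h : ℝ, 0 < h → μ {y | infDist y R ≤ h} =
      ENNReal.ofReal (π₀ + π₁) + ENNReal.ofReal π₂ * μ₂ {y | infDist y R ≤ h} := fun h h0 => by
    rw [hμ, ENNReal.ofReal_add hπ₀.le hπ₁.le]
    simp [hmass₀ h h0, hmass₁ h h0]
  have hmass₂ : ∀ h : ℝ, μ₂ {y | infDist y R ≤ h} ≤
      ENNReal.ofReal A₀ * volume {y | infDist y R ≤ h} := fun h => by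
    rw [hμ₂, withDensity_apply _ (hmeas h), ← setLIntegral_const]
    exact lintegral_mono fun x => ENNReal.ofReal_le_ofReal (hp₂up x)
  set K : ℝ := π₂ * (A₀ * (k * (3 * (Real.pi * (2 + L) ^ 2)))) with hK
  have hK0 : 0 ≤ K := by positivity
  -- Only `0 ≤ K` is recorded, so `K + 1` serves as the positive constant.
  have hbound : ∀ h : ℝ, 0 < h → h ≤ 1 →
      ENNReal.ofReal (π₀ + π₁) ≤ μ {y | infDist y R ≤ h} ∧
      μ {y | infDist y R ≤ h} ≤ ENNReal.ofReal (π₀ + π₁ + (K + 1) * h) := by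
    intro h h0 h1
    rw [hmass h h0]
    refine ⟨le_self_add, ?_⟩
    rw [ENNReal.ofReal_add (p := π₀ + π₁) (by positivity) (by positivity)]
    gcongr
    have hvol : volume {y | infDist y R ≤ h} ≤
        ENNReal.ofReal (k * (3 * (Real.pi * (2 + L) ^ 2)) * h) := by
      rw [hR] at hRne ⊢
      exact volume_dilation_le hL hγup hRne h0 h1
    calc ENNReal.ofReal π₂ * μ₂ {y | infDist y R ≤ h}
        ≤ ENNReal.ofReal π₂ * (ENNReal.ofReal A₀ *
            ENNReal.ofReal (k * (3 * (Real.pi * (2 + L) ^ 2)) * h)) := by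
          gcongr
          exact (hmass₂ h).trans (by gcongr)
      _ = ENNReal.ofReal (K * h) := by
          rw [← ENNReal.ofReal_mul hA₀, ← ENNReal.ofReal_mul hπ₂.le, hK]
          congr 1
          ring
      _ ≤ ENNReal.ofReal ((K + 1) * h) := ENNReal.ofReal_le_ofReal (by linarith)
  refine ⟨⟨K + 1, by positivity, hbound⟩, ?_⟩
  have hlim : Tendsto (fun h : ℝ => ENNReal.ofReal (π₀ + π₁ + (K + 1) * h)) (𝓝[>] (0:ℝ))
      (𝓝 (ENNReal.ofReal (π₀ + π₁))) := by
    have hcont : Continuous fun h : ℝ => ENNReal.ofReal (π₀ + π₁ + (K + 1) * h) :=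
      ENNReal.continuous_ofReal.comp (by fun_prop)
    simpa using (hcont.tendsto 0).mono_left nhdsWithin_le_nhds
  have hsmall : ∀ᶠ h : ℝ in 𝓝[>] (0:ℝ), h ∈ Ioc (0:ℝ) 1 := Ioc_mem_nhdsGT one_pos
  refine tendsto_of_tendsto_of_tendsto_of_le_of_le' tendsto_const_nhds hlim ?_ ?_
  · filter_upwards [hsmall] with h hh using (hbound h hh.1 hh.2).1
  · filter_upwards [hsmall] with h hh using (hbound h hh.1 hh.2).2
end
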